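/- arXiv:2006.10624 — 6 statements merged into one kernel-verified Lean document; each statement's English description precedes it below -/
import Mathlib

section
/- Let Ψ: ℝ → [0,∞) be convex, superlinear (Ψ(s)/|s| → +∞ as |s| → +∞) with Ψ(0) = 0, and let α: [0,∞)×[0,∞) → [0,∞) be concave and continuous. Define Υ: [0,∞)×[0,∞)×ℝ → [0,+∞] by Υ(u,v,w) := α(u,v)·Ψ(w/α(u,v)) if α(u,v) > 0, Υ(u,v,w) := 0 if α(u,v) = 0 and w = 0, and Υ(u,v,w) := +∞ if α(u,v) = 0 and w ≠ 0. Then: (i) Υ is convex on [0,∞)×[0,∞)×ℝ, i.e. Υ(t·p + (1−t)·q) ≤ t·Υ(p) + (1−t)·Υ(q) for all p, q in the domain and t ∈ [0,1] (with the usual arithmetic in [0,+∞]); (ii) Υ is lower semicontinuous on [0,∞)×[0,∞)×ℝ; (iii) if Ψ is in addition strictly convex, then for every (u,v) with α(u,v) > 0 the map w ↦ Υ(u,v,w) is strictly convex; (iv) if α is positively 1-homogeneous (α(λu,λv) = λα(u,v) for all λ ≥ 0), then Υ is positively 1-homogeneous: Υ(λu,λv,λw) = λ·Υ(u,v,w)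 for all λ > 0. -/
open Filter Set
open scoped ENNReal

/-- The perspective-type function `Υ(u,v,w) = α(u,v)·Ψ(w/α(u,v))`, extended by
`0` when `α(u,v) = 0` and `w = 0`, and by `+∞` when `α(u,v) = 0` and `w ≠ 0`. -/
noncomputable def Upsilon (Ψ : ℝ → ℝ) (α : ℝ → ℝ → ℝ) (u v w : ℝ) : ℝ≥0∞ :=
  if 0 < α u v then ENNReal.ofReal (α u v * Ψ (w / α u v))
  else if w = 0 then 0 else ⊤

/-
The closed perspective `f(a, w) = a Ψ(w / a)` is sublinear in `(a, w)` for convex `Ψ`, and `Ψ 0 = 0`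
gives `f(b, 0) = 0`, so subadditivity makes `f` nonincreasing in `a`:
`f(a + b, w) ≤ f(a, w) + f(b, 0)`. A sublinear function that is nonincreasing in `a` stays convex
when a concave `α` is substituted for `a`.

For lower semicontinuity, superlinearity makes `f(·, w)` right-continuous up to `a = 0`. If
`y < f(α(x₀), w₀)`, then `y < f(b, w₀)` for some `b > α(x₀)`. Near `(x₀, w₀)` we have `α(x) < b`, so
by monotonicity and lower semicontinuity of `f(b, ·)`, `f(α(x), w) ≥ f(b, w) > y`.
-/

open scoped Topology
open Bornology

/-- The closed perspective `(a, w) ↦ a Ψ(w / a)` of a function `Ψ` on a real vector space. It is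
`Upsilon` with the value of `α` as a free variable; negative `a` are treated like `a = 0`. -/
noncomputable def perspective {E : Type*} [AddCommGroup E] [Module ℝ E] (Ψ : E → ℝ) (a : ℝ)
    (w : E) : ℝ≥0∞ :=
  open Classical in
  if 0 < a then ENNReal.ofReal (a * Ψ (a⁻¹ • w)) else if w = 0 then 0 else ⊤

lemma upsilon_eq_perspective (Ψ : ℝ → ℝ) (α : ℝ → ℝ → ℝ) (u v w : ℝ) :
    Upsilon Ψ α u v w = perspective Ψ (α u v) w := by
  simp only [Upsilon, perspective, smul_eq_mul, div_eq_inv_mul]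

section VectorSpace

variable {X E : Type*} [AddCommGroup X] [Module ℝ X] [AddCommGroup E] [Module ℝ E]
  {Ψ : E → ℝ} {α : X → ℝ} {s : Set X} {a b c : ℝ} {v w : E}

lemma perspective_of_pos (ha : 0 < a) (w : E) :
    perspective Ψ a w = ENNReal.ofReal (a * Ψ (a⁻¹ • w)) :=
  if_pos ha

lemma perspective_of_nonpos_of_ne_zero (ha : a ≤ 0) (hw : w ≠ 0) : perspective Ψ a w = ⊤ := by
  rw [perspective, if_neg ha.not_gt, if_neg hw]

lemma perspective_of_nonpos_zero (ha : a ≤ 0) : perspective Ψ a 0 = 0 := by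
  rw [perspective, if_neg ha.not_gt, if_pos rfl]

lemma perspective_zero_right (hΨzero : Ψ 0 = 0) (a : ℝ) : perspective Ψ a 0 = 0 := by
  simp [perspective, hΨzero]

lemma perspective_mul_smul (hc : 0 ≤ c) (a : ℝ) (w : E) :
    perspective Ψ (c * a) (c • w) = ENNReal.ofReal c * perspective Ψ a w := by
  rcases hc.eq_or_lt with rfl | hc
  · rw [zero_mul, zero_smul, perspective_of_nonpos_zero le_rfl, ENNReal.ofReal_zero, zero_mul]
  rcases lt_or_ge 0 a with ha | ha
  · rw [perspective_of_pos (mul_pos hc ha), perspective_of_pos ha, smul_smul, mul_inv_rev,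
      inv_mul_cancel_right₀ hc.ne', mul_assoc, ENNReal.ofReal_mul hc.le]
  have hca : c * a ≤ 0 := mul_nonpos_of_nonneg_of_nonpos hc.le ha
  rcases eq_or_ne w 0 with rfl | hw
  · rw [smul_zero, perspective_of_nonpos_zero hca, perspective_of_nonpos_zero ha, mul_zero]
  · rw [perspective_of_nonpos_of_ne_zero hca (smul_ne_zero hc.ne' hw),
      perspective_of_nonpos_of_ne_zero ha hw, ENNReal.mul_top (ENNReal.ofReal_pos.2 hc).ne']

lemma mul_comp_inv_smul_add_le (hΨconv : ConvexOn ℝ univ Ψ) (ha : 0 < a) (hb : 0 < b) (v w : E) :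
    (a + b) * Ψ ((a + b)⁻¹ • (v + w)) ≤ a * Ψ (a⁻¹ • v) + b * Ψ (b⁻¹ • w) := by
  have hcomb : (a + b)⁻¹ • (v + w) = (a / (a + b)) • a⁻¹ • v + (b / (a + b)) • b⁻¹ • w := by
    rw [smul_smul, smul_smul, div_mul_eq_mul_div, div_mul_eq_mul_div, mul_inv_cancel₀ ha.ne',
      mul_inv_cancel₀ hb.ne', one_div, smul_add]
  calc (a + b) * Ψ ((a + b)⁻¹ • (v + w))
      ≤ (a + b) * (a / (a + b) * Ψ (a⁻¹ • v) + b / (a + b) * Ψ (b⁻¹ • w)) := by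
        rw [hcomb]
        gcongr
        exact hΨconv.2 (mem_univ _) (mem_univ _) (by positivity) (by positivity) (by field_simp)
    _ = a * Ψ (a⁻¹ • v) + b * Ψ (b⁻¹ • w) := by field_simp

lemma perspective_add_le (hΨconv : ConvexOn ℝ univ Ψ) (ha : 0 ≤ a) (hb : 0 ≤ b) (v w : E) :
    perspective Ψ (a + b) (v + w) ≤ perspective Ψ a v + perspective Ψ b w := by
  rcases ha.eq_or_lt with rfl | ha
  · rcases eq_or_ne v 0 with rfl | hv
    · simp only [zero_add, perspective_of_nonpos_zero le_rfl, le_refl]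
    · simp only [perspective_of_nonpos_of_ne_zero le_rfl hv, top_add, le_top]
  rcases hb.eq_or_lt with rfl | hb
  · rcases eq_or_ne w 0 with rfl | hw
    · simp only [add_zero, perspective_of_nonpos_zero le_rfl, le_refl]
    · simp only [perspective_of_nonpos_of_ne_zero le_rfl hw, add_top, le_top]
  simp only [perspective_of_pos ha, perspective_of_pos hb, perspective_of_pos (add_pos ha hb)]
  exact (ENNReal.ofReal_le_ofReal (mul_comp_inv_smul_add_le hΨconv ha hb v w)).trans
    ENNReal.ofReal_add_le

lemma antitone_perspective (hΨconv : ConvexOn ℝ univ Ψ) (hΨzero : Ψ 0 = 0) (w : E) :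
    Antitone fun a => perspective Ψ a w := by
  intro a b hab
  rcases eq_or_ne w 0 with rfl | hw
  · simp only [perspective_zero_right hΨzero, le_refl]
  rcases le_or_gt a 0 with ha | ha
  · simp only [perspective_of_nonpos_of_ne_zero ha hw, le_top]
  · calc perspective Ψ b w = perspective Ψ (a + (b - a)) (w + 0) := by
          rw [add_sub_cancel, add_zero]
      _ ≤ perspective Ψ a w + perspective Ψ (b - a) 0 :=
          perspective_add_le hΨconv ha.le (sub_nonneg.2 hab) w 0
      _ = perspective Ψ a w := by rw [perspective_zero_right hΨzero, add_zero]

lemma perspective_concaveOn_le (hΨconv : ConvexOn ℝ univ Ψ) (hΨzero : Ψ 0 = 0)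
    (hαconc : ConcaveOn ℝ s α) (hαnonneg : ∀ x ∈ s, 0 ≤ α x) {x y : X} (hx : x ∈ s) (hy : y ∈ s)
    (ha : 0 ≤ a) (hb : 0 ≤ b) (hab : a + b = 1) (v w : E) :
    perspective Ψ (α (a • x + b • y)) (a • v + b • w)
      ≤ ENNReal.ofReal a * perspective Ψ (α x) v + ENNReal.ofReal b * perspective Ψ (α y) w :=
  calc perspective Ψ (α (a • x + b • y)) (a • v + b • w)
      ≤ perspective Ψ (a * α x + b * α y) (a • v + b • w) :=
        antitone_perspective hΨconv hΨzero _ (hαconc.2 hx hy ha hb hab)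
    _ ≤ perspective Ψ (a * α x) (a • v) + perspective Ψ (b * α y) (b • w) :=
        perspective_add_le hΨconv (mul_nonneg ha (hαnonneg x hx)) (mul_nonneg hb (hαnonneg y hy))
          _ _
    _ = ENNReal.ofReal a * perspective Ψ (α x) v + ENNReal.ofReal b * perspective Ψ (α y) w := by
        rw [perspective_mul_smul ha, perspective_mul_smul hb]

lemma perspective_lt_of_strictConvexOn (hΨ : StrictConvexOn ℝ univ Ψ) (hΨnonneg : ∀ w, 0 ≤ Ψ w)
    (hc : 0 < c) (hvw : v ≠ w) (ha : 0 < a) (hb : 0 < b) (hab : a + b = 1) :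
    perspective Ψ c (a • v + b • w)
      < ENNReal.ofReal a * perspective Ψ c v + ENNReal.ofReal b * perspective Ψ c w := by
  have hterm_nonneg (u : E) : 0 ≤ c * Ψ (c⁻¹ • u) := mul_nonneg hc.le (hΨnonneg _)
  have hstrict : c * Ψ (c⁻¹ • (a • v + b • w))
      < a * (c * Ψ (c⁻¹ • v)) + b * (c * Ψ (c⁻¹ • w)) :=
    calc c * Ψ (c⁻¹ • (a • v + b • w)) = c * Ψ (a • c⁻¹ • v + b • c⁻¹ • w) := by
          rw [smul_add, smul_comm c⁻¹ a, smul_comm c⁻¹ b]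
      _ < c * (a * Ψ (c⁻¹ • v) + b * Ψ (c⁻¹ • w)) := by
          gcongr
          exact hΨ.2 (mem_univ _) (mem_univ _)
            ((smul_right_injective E (inv_ne_zero hc.ne')).ne hvw) ha hb hab
      _ = a * (c * Ψ (c⁻¹ • v)) + b * (c * Ψ (c⁻¹ • w)) := by ring
  simp only [perspective_of_pos hc]
  rw [← ENNReal.ofReal_mul ha.le, ← ENNReal.ofReal_mul hb.le,
    ← ENNReal.ofReal_add (mul_nonneg ha.le (hterm_nonneg v)) (mul_nonneg hb.le (hterm_nonneg w))]
  exact (ENNReal.ofReal_lt_ofReal_iff ((hterm_nonneg _).trans_lt hstrict)).2 hstrict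

lemma continuous_comp_smul_of_convexOn (hΨconv : ConvexOn ℝ univ Ψ) (w : E) :
    Continuous fun r : ℝ => Ψ (r • w) := by
  have hline : ConvexOn ℝ univ fun r : ℝ => Ψ (r • w) :=
    hΨconv.comp_linearMap (LinearMap.toSpanSingleton ℝ E w)
  exact continuousOn_univ.1 (hline.continuousOn isOpen_univ)

lemma tendsto_perspective_nhdsGT (hΨconv : ConvexOn ℝ univ Ψ) (hΨzero : Ψ 0 = 0)
    (hΨsuper : ∀ w ≠ 0, Tendsto (fun r : ℝ => Ψ (r • w) / r) atTop atTop) (ha : 0 ≤ a) (w : E) :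
    Tendsto (fun b => perspective Ψ b w) (𝓝[>] a) (𝓝 (perspective Ψ a w)) := by
  have hformula : (fun b => perspective Ψ b w) =ᶠ[𝓝[>] a]
      fun b => ENNReal.ofReal (b * Ψ (b⁻¹ • w)) := by
    filter_upwards [self_mem_nhdsWithin] with b hb
    exact perspective_of_pos (ha.trans_lt hb) w
  rcases ha.eq_or_lt with rfl | ha
  · rcases eq_or_ne w 0 with rfl | hw
    · simpa only [perspective_zero_right hΨzero] using tendsto_const_nhds
    · rw [perspective_of_nonpos_of_ne_zero le_rfl hw, tendsto_congr' hformula]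
      refine ENNReal.tendsto_ofReal_nhds_top.2 ?_
      simpa only [Function.comp_def, div_inv_eq_mul, mul_comm]
        using (hΨsuper w hw).comp tendsto_inv_nhdsGT_zero
  · rw [perspective_of_pos ha, tendsto_congr' hformula]
    have hinv : ContinuousAt (fun b : ℝ => Ψ (b⁻¹ • w)) a :=
      (continuous_comp_smul_of_convexOn hΨconv w).continuousAt.comp (continuousAt_inv₀ ha.ne')
    exact ENNReal.tendsto_ofReal ((continuousAt_id.mul hinv).tendsto.mono_left nhdsWithin_le_nhds)

end VectorSpace

section Semicontinuity

variable {X E : Type*} [TopologicalSpace X] [AddCommGroup E] [Module ℝ E] [TopologicalSpace E]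
  [ContinuousConstSMul ℝ E] {Ψ : E → ℝ} {α : X → ℝ} {s : Set X} {a : ℝ}

lemma lowerSemicontinuous_perspective_of_pos (hΨlsc : LowerSemicontinuous Ψ) (ha : 0 < a) :
    LowerSemicontinuous (perspective Ψ a) := by
  have hmono : Monotone fun r : ℝ => ENNReal.ofReal (a * r) := fun _ _ hr =>
    ENNReal.ofReal_le_ofReal (mul_le_mul_of_nonneg_left hr ha.le)
  have hcont : Continuous fun r : ℝ => ENNReal.ofReal (a * r) :=
    ENNReal.continuous_ofReal.comp (continuous_const_mul a)
  rw [funext (perspective_of_pos ha)]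
  exact hcont.comp_lowerSemicontinuous (hΨlsc.comp (continuous_const_smul a⁻¹)) hmono

lemma lowerSemicontinuousOn_perspective (hΨconv : ConvexOn ℝ univ Ψ) (hΨlsc : LowerSemicontinuous Ψ)
    (hΨzero : Ψ 0 = 0) (hΨsuper : ∀ w ≠ 0, Tendsto (fun r : ℝ => Ψ (r • w) / r) atTop atTop)
    (hαusc : UpperSemicontinuousOn α s) (hαnonneg : ∀ x ∈ s, 0 ≤ α x) :
    LowerSemicontinuousOn (fun p : X × E => perspective Ψ (α p.1) p.2) (s ×ˢ univ) := by
  rintro ⟨x₀, w₀⟩ ⟨hx₀, -⟩ y hy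
  obtain ⟨b, hyb, hb⟩ : ∃ b, y < perspective Ψ b w₀ ∧ α x₀ < b :=
    (((tendsto_perspective_nhdsGT hΨconv hΨzero hΨsuper (hαnonneg x₀ hx₀) w₀).eventually_const_lt
      hy).and self_mem_nhdsWithin).exists
  have hb_pos : 0 < b := (hαnonneg x₀ hx₀).trans_lt hb
  have hα_lt : ∀ᶠ x in 𝓝[s] x₀, α x < b := hαusc x₀ hx₀ b hb
  have hy_lt : ∀ᶠ w in 𝓝 w₀, y < perspective Ψ b w :=
    lowerSemicontinuous_perspective_of_pos hΨlsc hb_pos w₀ y hyb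
  rw [nhdsWithin_prod_eq, nhdsWithin_univ]
  filter_upwards [hα_lt.prod_mk hy_lt] with p ⟨hαp, hyp⟩
  exact hyp.trans_le (antitone_perspective hΨconv hΨzero p.2 hαp.le)

end Semicontinuity

lemma tendsto_smul_div_atTop_of_superlinear {E : Type*} [NormedAddCommGroup E] [NormedSpace ℝ E]
    {Ψ : E → ℝ} (hΨsuper : Tendsto (fun w => Ψ w / ‖w‖) (cobounded E) atTop) {w : E} (hw : w ≠ 0) :
    Tendsto (fun r : ℝ => Ψ (r • w) / r) atTop atTop := by
  have hnorm : 0 < ‖w‖ := norm_pos_iff.2 hw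
  have hray : Tendsto (fun r : ℝ => r • w) atTop (cobounded E) := by
    rw [← tendsto_norm_atTop_iff_cobounded]
    simpa only [norm_smul] using tendsto_norm_atTop_atTop.atTop_mul_const hnorm
  refine ((hΨsuper.comp hray).atTop_mul_const hnorm).congr' ?_
  filter_upwards [eventually_gt_atTop 0] with r hr
  simp only [Function.comp_apply, norm_smul, Real.norm_of_nonneg hr.le]
  field_simp

theorem upsilon_properties_general {X E : Type*} [AddCommGroup X] [Module ℝ X] [TopologicalSpace X]
    [AddCommGroup E] [Module ℝ E] [TopologicalSpace E] [ContinuousConstSMul ℝ E]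
    {Ψ : E → ℝ} {α : X → ℝ} {s : Set X}
    (hΨconv : ConvexOn ℝ univ Ψ) (hΨlsc : LowerSemicontinuous Ψ) (hΨnonneg : ∀ w, 0 ≤ Ψ w)
    (hΨzero : Ψ 0 = 0) (hΨsuper : ∀ w ≠ 0, Tendsto (fun r : ℝ => Ψ (r • w) / r) atTop atTop)
    (hαconc : ConcaveOn ℝ s α) (hαusc : UpperSemicontinuousOn α s) (hαnonneg : ∀ x ∈ s, 0 ≤ α x) :
    (∀ x ∈ s, ∀ y ∈ s, ∀ (v w : E) (a b : ℝ), 0 ≤ a → 0 ≤ b → a + b = 1 →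
      perspective Ψ (α (a • x + b • y)) (a • v + b • w)
        ≤ ENNReal.ofReal a * perspective Ψ (α x) v + ENNReal.ofReal b * perspective Ψ (α y) w) ∧
    LowerSemicontinuousOn (fun p : X × E => perspective Ψ (α p.1) p.2) (s ×ˢ univ) ∧
    (StrictConvexOn ℝ univ Ψ → ∀ x, 0 < α x → ∀ (v w : E) (a b : ℝ), v ≠ w → 0 < a → 0 < b →
      a + b = 1 → perspective Ψ (α x) (a • v + b • w)
        < ENNReal.ofReal a * perspective Ψ (α x) v + ENNReal.ofReal b * perspective Ψ (α x) w) ∧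
    ((∀ c : ℝ, 0 < c → ∀ x ∈ s, α (c • x) = c * α x) → ∀ c : ℝ, 0 < c → ∀ x ∈ s, ∀ w : E,
      perspective Ψ (α (c • x)) (c • w) = ENNReal.ofReal c * perspective Ψ (α x) w) := by
  refine ⟨?_, ?_, ?_, ?_⟩
  · intro x hx y hy v w a b ha hb hab
    exact perspective_concaveOn_le hΨconv hΨzero hαconc hαnonneg hx hy ha hb hab v w
  · exact lowerSemicontinuousOn_perspective hΨconv hΨlsc hΨzero hΨsuper hαusc hαnonneg
  · intro hΨstrict x hx v w a b hvw ha hb hab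
    exact perspective_lt_of_strictConvexOn hΨstrict hΨnonneg hx hvw ha hb hab
  · intro hαhom c hc x hx w
    rw [hαhom c hc x hx, perspective_mul_smul hc.le]

theorem upsilon_properties
    (Ψ : ℝ → ℝ) (α : ℝ → ℝ → ℝ)
    (hΨconv : ConvexOn ℝ Set.univ Ψ)
    (hΨnonneg : ∀ s : ℝ, 0 ≤ Ψ s)
    (hΨzero : Ψ 0 = 0)
    (hΨsuper_top : Tendsto (fun s : ℝ => Ψ s / |s|) atTop atTop)
    (hΨsuper_bot : Tendsto (fun s : ℝ => Ψ s / |s|) atBot atTop)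
    (hαconc : ConcaveOn ℝ (Set.Ici (0:ℝ) ×ˢ Set.Ici (0:ℝ)) (fun p => α p.1 p.2))
    (hαcont : ContinuousOn (fun p : ℝ × ℝ => α p.1 p.2) (Set.Ici (0:ℝ) ×ˢ Set.Ici (0:ℝ)))
    (hαnonneg : ∀ u v : ℝ, 0 ≤ u → 0 ≤ v → 0 ≤ α u v) :
    -- (i) convexity of Υ on [0,∞)×[0,∞)×ℝ
    (∀ u₁ v₁ w₁ u₂ v₂ w₂ t : ℝ, 0 ≤ u₁ → 0 ≤ v₁ → 0 ≤ u₂ → 0 ≤ v₂ →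
        0 ≤ t → t ≤ 1 →
        Upsilon Ψ α (t * u₁ + (1 - t) * u₂) (t * v₁ + (1 - t) * v₂)
            (t * w₁ + (1 - t) * w₂)
          ≤ ENNReal.ofReal t * Upsilon Ψ α u₁ v₁ w₁
            + ENNReal.ofReal (1 - t) * Upsilon Ψ α u₂ v₂ w₂) ∧
    -- (ii) lower semicontinuity on [0,∞)×[0,∞)×ℝ
    LowerSemicontinuousOn (fun p : ℝ × ℝ × ℝ => Upsilon Ψ α p.1 p.2.1 p.2.2)
      {p : ℝ × ℝ × ℝ | 0 ≤ p.1 ∧ 0 ≤ p.2.1} ∧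
    -- (iii) strict convexity in `w` when `Ψ` is strictly convex and `α(u,v) > 0`
    (StrictConvexOn ℝ Set.univ Ψ →
      ∀ u v : ℝ, 0 ≤ u → 0 ≤ v → 0 < α u v →
        ∀ w₁ w₂ t : ℝ, w₁ ≠ w₂ → 0 < t → t < 1 →
          Upsilon Ψ α u v (t * w₁ + (1 - t) * w₂)
            < ENNReal.ofReal t * Upsilon Ψ α u v w₁
              + ENNReal.ofReal (1 - t) * Upsilon Ψ α u v w₂) ∧
    -- (iv) positive 1-homogeneity when α is positively 1-homogeneous
    ((∀ lam u v : ℝ, 0 ≤ lam → 0 ≤ u → 0 ≤ v → α (lam * u) (lam * v) = lam * α u v) →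
      ∀ lam u v w : ℝ, 0 < lam → 0 ≤ u → 0 ≤ v →
        Upsilon Ψ α (lam * u) (lam * v) (lam * w) = ENNReal.ofReal lam * Upsilon Ψ α u v w) := by
  have hΨcont : Continuous Ψ := continuousOn_univ.1 (hΨconv.continuousOn isOpen_univ)
  have hΨsuper : Tendsto (fun s : ℝ => Ψ s / ‖s‖) (cobounded ℝ) atTop := by
    rw [IsOrderBornology.cobounded_eq]
    exact hΨsuper_bot.sup hΨsuper_top
  obtain ⟨hconvex, hlsc, hstrict, hhom⟩ :=
    upsilon_properties_general hΨconv hΨcont.lowerSemicontinuous hΨnonneg hΨzero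
      (fun _ hw => tendsto_smul_div_atTop_of_superlinear hΨsuper hw) hαconc
      hαcont.upperSemicontinuousOn fun p hp => hαnonneg p.1 p.2 hp.1 hp.2
  simp only [upsilon_eq_perspective]
  refine ⟨?_, ?_, ?_, ?_⟩
  · intro u₁ v₁ w₁ u₂ v₂ w₂ t hu₁ hv₁ hu₂ hv₂ ht₀ ht₁
    exact hconvex (u₁, v₁) ⟨hu₁, hv₁⟩ (u₂, v₂) ⟨hu₂, hv₂⟩ w₁ w₂ t (1 - t) ht₀
      (sub_nonneg.2 ht₁) (add_sub_cancel t 1)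
  · exact hlsc.comp (g := fun p : ℝ × ℝ × ℝ => ((p.1, p.2.1), p.2.2)) (by fun_prop)
      fun p hp => ⟨hp, mem_univ _⟩
  · intro hΨstrict u v _ _ hα w₁ w₂ t hw ht₀ ht₁
    exact hstrict hΨstrict (u, v) hα w₁ w₂ t (1 - t) hw ht₀ (sub_pos.2 ht₁) (add_sub_cancel t 1)
  · intro hαhom lam u v w hlam hu hv
    exact hhom (fun c hc p hp => hαhom c p.1 p.2 hc.le hp.1 hp.2) lam hlam (u, v) ⟨hu, hv⟩ w
end

section
/- Let f: [0,∞) → [0,∞) be continuous and nondecreasing with f(r) → +∞ as r → +∞, and let f₀ ≥ 0 be such that there exist c > 0 and δ > 0 with f(r) − f₀ ≥ c·r for every r ∈ (0,δ) (i.e. liminf_{r↓0} (f(r) − f₀)/r > 0). Then for every g₀ ∈ [0, f₀] there exists a function g: ℝ → ℝ of class C^∞ that is concave and nonnegative on [0,∞), satisfies g(r) ≤ f(r) for every r ≥ 0, g(0) = g₀, and g(r) → +∞ as r → +∞. -/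
open Filter

/-!
The minorant is `g r = g₀ + a * ∑ n, (1 - exp (-(lam n * r)))` with positive rates `lam n`. Each
summand is increasing, concave, at most `min 1 (lam n * r)`, and tends to `1`, so infinitely many
of them add up to an unbounded function. If each rate is at most half the previous one, the sum at
`r ≥ 0` exceeds the number of `n` with `1 / 2 ≤ lam n * r` by at most `1`. When the rates decrease
fast enough, this count grows more slowly than any prescribed function tending to infinity.
-/

open Set
open scoped ContDiff

section ConcaveSeries

variable {ι E : Type*} [AddCommGroup E] [Module ℝ E]

lemma concaveOn_tsum {s : Set E} {F : ι → E → ℝ} (hs : Convex ℝ s)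
    (hF : ∀ i, ConcaveOn ℝ s (F i)) (hsum : ∀ x ∈ s, Summable fun i ↦ F i x) :
    ConcaveOn ℝ s fun x ↦ ∑' i, F i x := by
  refine ⟨hs, fun x hx y hy a b ha hb hab ↦ ?_⟩
  have hsum_x : Summable fun i ↦ a • F i x := (hsum x hx).const_smul a
  have hsum_y : Summable fun i ↦ b • F i y := (hsum y hy).const_smul b
  calc a • ∑' i, F i x + b • ∑' i, F i y
      = ∑' i, (a • F i x + b • F i y) := by
        rw [hsum_x.tsum_add hsum_y, (hsum x hx).tsum_const_smul a, (hsum y hy).tsum_const_smul b]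
    _ ≤ ∑' i, F i (a • x + b • y) :=
        (hsum_x.add hsum_y).tsum_le_tsum (fun i ↦ (hF i).2 hx hy ha hb hab)
          (hsum _ (hs hx hy ha hb hab))

end ConcaveSeries

section ExponentialBounds

lemma one_sub_exp_neg_le_min (x : ℝ) : 1 - Real.exp (-x) ≤ min 1 x :=
  le_min (by linarith [Real.exp_pos (-x)]) (by linarith [Real.one_sub_le_exp_neg x])

lemma one_sub_exp_neg_nonneg {x : ℝ} (hx : 0 ≤ x) : 0 ≤ 1 - Real.exp (-x) :=
  sub_nonneg.mpr (Real.exp_le_one_iff.mpr (neg_nonpos.mpr hx))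

lemma norm_one_sub_cexp_neg_le (z : ℂ) : ‖1 - Complex.exp (-z)‖ ≤ ‖z‖ * Real.exp ‖z‖ := by
  simpa [norm_sub_rev] using Complex.norm_exp_sub_sum_le_norm_mul_exp (-z) 1

lemma concaveOn_one_sub_exp_neg_mul (c : ℝ) :
    ConcaveOn ℝ univ fun r : ℝ ↦ 1 - Real.exp (-(c * r)) := by
  have hconv : ConvexOn ℝ univ fun r : ℝ ↦ Real.exp (-(c * r)) := by
    simpa [Function.comp_def] using convexOn_exp.comp_linearMap (LinearMap.mulLeft ℝ (-c))
  exact (concaveOn_const 1 convex_univ).sub hconv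

end ExponentialBounds

/-- The function `r ↦ ∑ i, (1 - exp (-(lam i * r)))`, that is, the Bernstein function without
killing and drift whose Lévy measure is the sum of the unit masses at the rates `lam i`. It is
meaningful for summable `lam`, and is taken on the whole line rather than on `[0, ∞)`. -/
noncomputable def discreteBernstein {ι : Type*} (lam : ι → ℝ) (r : ℝ) : ℝ :=
  ∑' i, (1 - Real.exp (-(lam i * r)))

namespace discreteBernstein

variable {ι : Type*} {lam : ι → ℝ}

@[simp]
lemma apply_zero (lam : ι → ℝ) : discreteBernstein lam 0 = 0 := by
  simp [discreteBernstein]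

lemma norm_one_sub_cexp_neg_mul_le (hlam : Summable lam) {z : ℂ} {R : ℝ} (hz : ‖z‖ ≤ R) (i : ι) :
    ‖1 - Complex.exp (-(lam i * z))‖ ≤ |lam i| * (R * Real.exp ((∑' j, |lam j|) * R)) := by
  have hR : 0 ≤ R := (norm_nonneg z).trans hz
  have hle : |lam i| ≤ ∑' j, |lam j| := hlam.abs.le_tsum i fun j _ ↦ abs_nonneg (lam j)
  calc ‖1 - Complex.exp (-(lam i * z))‖
      ≤ ‖lam i * z‖ * Real.exp ‖lam i * z‖ := norm_one_sub_cexp_neg_le _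
    _ = |lam i| * ‖z‖ * Real.exp (|lam i| * ‖z‖) := by
        rw [norm_mul, Complex.norm_real, Real.norm_eq_abs]
    _ ≤ |lam i| * R * Real.exp ((∑' j, |lam j|) * R) := by gcongr
    _ = |lam i| * (R * Real.exp ((∑' j, |lam j|) * R)) := mul_assoc _ _ _

lemma summable (hlam : Summable lam) (r : ℝ) :
    Summable fun i ↦ 1 - Real.exp (-(lam i * r)) := by
  have hbound := norm_one_sub_cexp_neg_mul_le hlam (le_refl ‖(r : ℂ)‖)
  exact .of_norm_bounded (hlam.abs.mul_right _) fun i ↦ by exact_mod_cast hbound i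

lemma differentiable_complex_tsum (hlam : Summable lam) :
    Differentiable ℂ fun z : ℂ ↦ ∑' i, (1 - Complex.exp (-(lam i * z))) := by
  intro z
  have hz : z ∈ Metric.ball (0 : ℂ) (‖z‖ + 1) := by simp
  have hdiff := Complex.differentiableOn_tsum_of_summable_norm
    (F := fun i (w : ℂ) ↦ 1 - Complex.exp (-(lam i * w))) (hlam.abs.mul_right _)
    (fun i ↦ by fun_prop) Metric.isOpen_ball
    (fun i w (hw : w ∈ Metric.ball 0 (‖z‖ + 1)) ↦
      norm_one_sub_cexp_neg_mul_le hlam (mem_ball_zero_iff.mp hw).le i)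
  exact hdiff.differentiableAt (Metric.isOpen_ball.mem_nhds hz)

lemma contDiff (hlam : Summable lam) {n : WithTop ℕ∞} : ContDiff ℝ n (discreteBernstein lam) := by
  have hre : discreteBernstein lam =
      fun r : ℝ ↦ (∑' i, (1 - Complex.exp (-(lam i * (r : ℂ))))).re := by
    funext r
    rw [discreteBernstein, ← Complex.ofReal_re (∑' i, _)]
    push_cast
    rfl
  rw [hre]
  exact (differentiable_complex_tsum hlam).contDiff.real_of_complex

lemma concaveOn (hlam : Summable lam) : ConcaveOn ℝ univ (discreteBernstein lam) :=
  concaveOn_tsum convex_univ (fun i ↦ concaveOn_one_sub_exp_neg_mul (lam i))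
    fun r _ ↦ summable hlam r

lemma monotone (hlam : Summable lam) (hnonneg : ∀ i, 0 ≤ lam i) :
    Monotone (discreteBernstein lam) := by
  intro r s hrs
  refine (summable hlam r).tsum_le_tsum (fun i ↦ ?_) (summable hlam s)
  have := hnonneg i
  gcongr

lemma tendsto_atTop [Infinite ι] (hlam : Summable lam) (hpos : ∀ i, 0 < lam i) :
    Tendsto (discreteBernstein lam) atTop atTop := by
  refine Filter.tendsto_atTop.mpr fun M ↦ ?_
  obtain ⟨n, hn⟩ := exists_nat_gt M
  obtain ⟨t, ht⟩ := Infinite.exists_subset_card_eq ι n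
  have hpartial : Tendsto (fun r : ℝ ↦ ∑ i ∈ t, (1 - Real.exp (-(lam i * r)))) atTop
      (nhds (∑ _i ∈ t, (1 - 0))) :=
    tendsto_finsetSum t fun i _ ↦ tendsto_const_nhds.sub
      (Real.tendsto_exp_neg_atTop_nhds_zero.comp (tendsto_id.const_mul_atTop (hpos i)))
  have hlarge := hpartial.eventually_const_lt (u := M) (by simpa [ht] using hn)
  filter_upwards [hlarge, eventually_ge_atTop 0] with r hr hr0
  exact hr.le.trans <| (summable hlam r).sum_le_tsum t fun i _ ↦
    one_sub_exp_neg_nonneg (mul_nonneg (hpos i).le hr0)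

end discreteBernstein

section SlowGrowth

-- The extra summand `min 1 (x n)` stands for the geometrically decaying tail and makes the
-- induction go through.
lemma sum_min_one_add_min_one_le {x : ℕ → ℝ} {y : ℝ} (hx : ∀ n, x (n + 1) ≤ x n / 2)
    (hy : 2 * min 1 (x 0) ≤ y) (hlarge : ∀ n : ℕ, 1 / 2 ≤ x (n + 1) → n + 3 ≤ y) (n : ℕ) :
    ∑ k ∈ Finset.range (n + 1), min 1 (x k) + min 1 (x n) ≤ y := by
  induction n with
  | zero => simpa [two_mul] using hy
  | succ n ih =>
    rcases le_total (1 / 2) (x (n + 1)) with hge | hle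
    · have hsum : ∑ k ∈ Finset.range (n + 2), min 1 (x k) ≤ n + 2 := by
        simpa using Finset.sum_le_card_nsmul (Finset.range (n + 2)) (fun k ↦ min 1 (x k)) 1
          fun k _ ↦ min_le_left _ _
      linarith [hlarge n hge, min_le_left 1 (x (n + 1))]
    · have htail : min 1 (x (n + 1)) + min 1 (x (n + 1)) ≤ min 1 (x n) := by
        have := min_le_right 1 (x (n + 1))
        exact le_min (by linarith) (by linarith [hx n])
      rw [Finset.sum_range_succ]
      linarith

lemma exists_pos_le_half_forall_of_eventually_atTop {p : ℝ → Prop} (hp : ∀ᶠ r in atTop, p r)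
    {l : ℝ} (hl : 0 < l) : ∃ l' > 0, l' ≤ l / 2 ∧ ∀ r, 1 / 2 ≤ l' * r → p r := by
  obtain ⟨R, hR⟩ := eventually_atTop.mp hp
  set M := max R 1
  have hM_pos : 0 < M := zero_lt_one.trans_le (le_max_right R 1)
  refine ⟨min (l / 2) (1 / 2 / M), by positivity, min_le_left _ _, fun r hr ↦ hR r ?_⟩
  have hr_pos : 0 < r := pos_of_mul_pos_right (one_half_pos.trans_le hr) (by positivity)
  have hle : 1 / 2 ≤ 1 / 2 / M * r :=
    hr.trans (mul_le_mul_of_nonneg_right (min_le_right _ _) hr_pos.le)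
  rw [div_mul_eq_mul_div, le_div_iff₀ hM_pos] at hle
  linarith [le_max_left R 1]

lemma exists_seq_le_half_forall_of_eventually_atTop {p : ℕ → ℝ → Prop}
    (hp : ∀ n, ∀ᶠ r in atTop, p n r) {l : ℝ} (hl : 0 < l) :
    ∃ lam : ℕ → ℝ, lam 0 = l ∧ (∀ n, 0 < lam n) ∧ (∀ n, lam (n + 1) ≤ lam n / 2) ∧
      ∀ n r, 1 / 2 ≤ lam (n + 1) * r → p n r := by
  choose! next next_pos next_le hnext using
    fun n l ↦ exists_pos_le_half_forall_of_eventually_atTop (hp n) (l := l)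
  let lam : ℕ → ℝ := fun n ↦ Nat.rec l next n
  have lam_pos : ∀ n, 0 < lam n := Nat.rec hl fun n ↦ next_pos n (lam n)
  exact ⟨lam, rfl, lam_pos, fun n ↦ next_le n _ (lam_pos n), fun n ↦ hnext n _ (lam_pos n)⟩

lemma summable_of_le_half {lam : ℕ → ℝ} (hnonneg : ∀ n, 0 ≤ lam n)
    (hhalf : ∀ n, lam (n + 1) ≤ lam n / 2) : Summable lam := by
  refine summable_of_ratio_norm_eventually_le one_half_lt_one (.of_forall fun n ↦ ?_)
  rw [Real.norm_of_nonneg (hnonneg _), Real.norm_of_nonneg (hnonneg _)]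
  linarith [hhalf n]

lemma exists_discreteBernstein_le {h : ℝ → ℝ} {l : ℝ} (hl : 0 < l)
    (h_top : Tendsto h atTop atTop) (h_ge : ∀ r, 0 ≤ r → 2 * min 1 (l * r) ≤ h r) :
    ∃ lam : ℕ → ℝ, (∀ n, 0 < lam n) ∧ Summable lam ∧
      ∀ r, 0 ≤ r → discreteBernstein lam r ≤ h r := by
  obtain ⟨lam, rfl, hpos, hhalf, hlarge⟩ := exists_seq_le_half_forall_of_eventually_atTop
    (fun n : ℕ ↦ h_top.eventually_ge_atTop (n + 3 : ℝ)) hl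
  refine ⟨lam, hpos, summable_of_le_half (fun n ↦ (hpos n).le) hhalf, fun r hr ↦ ?_⟩
  have hx_nonneg (n : ℕ) : 0 ≤ lam n * r := mul_nonneg (hpos n).le hr
  have hx_half (n : ℕ) : lam (n + 1) * r ≤ lam n * r / 2 := by
    linarith [mul_le_mul_of_nonneg_right (hhalf n) hr]
  refine Real.tsum_le_of_sum_range_le (fun n ↦ one_sub_exp_neg_nonneg (hx_nonneg n)) fun n ↦ ?_
  calc ∑ k ∈ Finset.range n, (1 - Real.exp (-(lam k * r)))
      ≤ ∑ k ∈ Finset.range n, min 1 (lam k * r) :=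
        Finset.sum_le_sum fun k _ ↦ one_sub_exp_neg_le_min _
    _ ≤ ∑ k ∈ Finset.range (n + 1), min 1 (lam k * r) + min 1 (lam n * r) := by
        have : 0 ≤ min 1 (lam n * r) := le_min zero_le_one (hx_nonneg n)
        rw [Finset.sum_range_succ]
        linarith
    _ ≤ h r := sum_min_one_add_min_one_le hx_half (h_ge r hr) (fun k ↦ hlarge k r) n

end SlowGrowth

lemma add_mul_min_le_of_add_mul_le {f : ℝ → ℝ} {c s y : ℝ} (hs : 0 < s)
    (hf_cont : ContinuousWithinAt f (Ici 0) 0) (hf_mono : MonotoneOn f (Ici 0))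
    (hslope : ∀ r ∈ Ioc 0 s, y + c * r ≤ f r) {r : ℝ} (hr : 0 ≤ r) :
    y + c * min s r ≤ f r := by
  have h_zero : y + c * 0 ≤ f 0 :=
    ContinuousWithinAt.closure_le (by simp [closure_Ioc hs.ne, hs.le])
      (by fun_prop) (hf_cont.mono (Ioc_subset_Icc_self.trans Icc_subset_Ici_self)) hslope
  rcases hr.eq_or_lt with rfl | hr_pos
  · simpa [min_eq_right hs.le] using h_zero
  · have hmin_pos : 0 < min s r := lt_min hs hr_pos
    exact (hslope _ ⟨hmin_pos, min_le_left s r⟩).trans (hf_mono hmin_pos.le hr (min_le_right s r))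

theorem smooth_concave_minorant_general {f : ℝ → ℝ} {c s y : ℝ} (hc : 0 < c) (hs : 0 < s)
    (hf_top : Tendsto f atTop atTop) (hf_ge : ∀ r, 0 ≤ r → y + c * min s r ≤ f r) :
    ∃ g : ℝ → ℝ, ContDiff ℝ ω g ∧ ConcaveOn ℝ univ g ∧ Monotone g ∧
      (∀ r, 0 ≤ r → g r ≤ f r) ∧ g 0 = y ∧ Tendsto g atTop atTop := by
  set a : ℝ := c * s / 2 with ha_def
  have ha : 0 < a := by positivity
  have h_top : Tendsto (fun r ↦ (f r - y) / a) atTop atTop :=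
    (tendsto_atTop_add_const_right _ (-y) hf_top).atTop_div_const ha
  have h_ge (r : ℝ) (hr : 0 ≤ r) : 2 * min 1 (s⁻¹ * r) ≤ (f r - y) / a := by
    have hscale : 2 * min 1 (s⁻¹ * r) * a = c * min s r := by
      rw [← mul_inv_cancel₀ hs.ne', mul_comm s, ← mul_min_of_nonneg _ _ (inv_nonneg.mpr hs.le)]
      rw [ha_def]
      field_simp
    rw [le_div_iff₀ ha, hscale]
    linarith [hf_ge r hr]
  obtain ⟨lam, hpos, hlam, hle⟩ := exists_discreteBernstein_le (inv_pos.mpr hs) h_top h_ge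
  refine ⟨fun r ↦ y + a * discreteBernstein lam r,
    contDiff_const.add (contDiff_const.mul (discreteBernstein.contDiff hlam)),
    (concaveOn_const y convex_univ).add ((discreteBernstein.concaveOn hlam).smul ha.le),
    ((discreteBernstein.monotone hlam fun n ↦ (hpos n).le).const_mul ha.le).const_add y,
    fun r hr ↦ ?_, by simp, tendsto_atTop_add_const_left _ _
      ((discreteBernstein.tendsto_atTop hlam hpos).const_mul_atTop ha)⟩
  linarith [(le_div_iff₀' ha).mp (hle r hr)]

/-- A smooth concave nonnegative minorant `g` of a continuous nondecreasing function
`f` that diverges at infinity, with prescribed value `g(0) = g₀ ∈ [0, f₀]`,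
where `f` has positive slope above `f₀` near `0`. -/
theorem smooth_concave_minorant
    (f : ℝ → ℝ) (f₀ : ℝ)
    (hf_cont : ContinuousOn f (Set.Ici (0:ℝ)))
    (hf_mono : MonotoneOn f (Set.Ici (0:ℝ)))
    (hf_nonneg : ∀ r : ℝ, 0 ≤ r → 0 ≤ f r)
    (hf_top : Tendsto f atTop atTop)
    (hf₀ : 0 ≤ f₀)
    (hslope : ∃ c : ℝ, 0 < c ∧ ∃ δ : ℝ, 0 < δ ∧
      ∀ r : ℝ, 0 < r → r < δ → c * r ≤ f r - f₀) :
    ∀ g₀ : ℝ, 0 ≤ g₀ → g₀ ≤ f₀ →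
      ∃ g : ℝ → ℝ, ContDiff ℝ (⊤ : ℕ∞) g ∧ ConcaveOn ℝ (Set.Ici 0) g ∧
        (∀ r : ℝ, 0 ≤ r → 0 ≤ g r) ∧ (∀ r : ℝ, 0 ≤ r → g r ≤ f r) ∧
        g 0 = g₀ ∧ Tendsto g atTop atTop := by
  intro g₀ hg₀ hgf
  obtain ⟨c, hc, δ, hδ, hslope⟩ := hslope
  have hf_ge (r : ℝ) (hr : 0 ≤ r) : g₀ + c * min (δ / 2) r ≤ f r :=
    add_mul_min_le_of_add_mul_le (half_pos hδ) (hf_cont 0 self_mem_Ici) hf_mono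
      (fun t ht ↦ by linarith [hslope t ht.1 (ht.2.trans_lt (half_lt_self hδ))]) hr
  obtain ⟨g, hg_smooth, hg_concave, hg_mono, hg_le, rfl, hg_top⟩ :=
    smooth_concave_minorant_general hc (half_pos hδ) hf_top hf_ge
  exact ⟨g, hg_smooth.of_le le_top, hg_concave.subset (subset_univ _) (convex_Ici 0),
    fun r hr ↦ hg₀.trans (hg_mono hr), hg_le, rfl, hg_top⟩
end

section
/- Let Ψ*: ℝ → ℝ be convex, differentiable, even, nonnegative, with Ψ*(0) = 0 and superlinear. Let α: [0,∞)×[0,∞) → [0,∞) be continuous, concave, symmetric (α(u,v) = α(v,u)), not identically zero, and satisfy lim_{r→∞} α(r,1)/r = 0. Let β: [0,∞) → [0,∞) be convex and superlinear, and assume there exists β₀' > 0 such that β(s) − β(r) ≥ β₀'·(s − r) for all 0 ≤ r ≤ s. Then there exists a function ω: [0,∞) → [0,∞) of class C^∞, convex and superlinear, such that ω(r) ≤ β(r) for every r ≥ 0 and Ψ*(ω'(s) − ω'(r))·α(s,r) ≤ r + s for all r, s ≥ 0. -/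
open Filter

/-!
Take `ω' = a * H`, where `H` is a smooth staircase that climbs by one unit just after each point of
a sequence `U` increasing very rapidly to infinity, and `a > 0` is so small that
`Ψ* a * α 1 1 ≤ 1`. For `r ≤ s` there are two cases.

* If `H s - H r ≤ 1`, then `Ψ* (ω' s - ω' r) ≤ Ψ* a`, while concavity gives `α s r ≤ s * α 1 1`.
* Otherwise `r` comes no later than the second-to-last step before `s`. By concavity `α s r = o(s)`
  uniformly for `r` bounded, so `Ψ* (ω' s) * α s r ≤ s` provided that the last step before `s` was
  placed far enough beyond the preceding one.

Placing the steps far enough out also keeps `ω r ≤ r * ω' r` below the superlinear function `β`.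
-/

section Convexity

lemma le_of_abs_le_abs_of_convexOn_of_even {f : ℝ → ℝ} (hf : ConvexOn ℝ Set.univ f)
    (heven : f.Even) {x y : ℝ} (hxy : |x| ≤ |y|) : f x ≤ f y := by
  have hmax := hf.le_max_of_mem_Icc (Set.mem_univ (-|y|)) (Set.mem_univ |y|) (abs_le.1 hxy)
  have habs : f |y| = f y := by
    rcases abs_choice y with h | h <;> rw [h]
    exact heven y
  rwa [heven, max_self, habs] at hmax

lemma nonneg_of_convexOn_of_even {f : ℝ → ℝ} (hf : ConvexOn ℝ Set.univ f) (heven : f.Even)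
    (hf0 : f 0 = 0) (x : ℝ) : 0 ≤ f x :=
  hf0.ge.trans (le_of_abs_le_abs_of_convexOn_of_even hf heven (by simp))

lemma map_smul_le_of_concaveOn {E : Type*} [AddCommGroup E] [Module ℝ E] {s : Set E} {f : E → ℝ}
    (hf : ConcaveOn ℝ s f) (h0 : 0 ∈ s) (hf0 : 0 ≤ f 0) {c : ℝ} (hc : 1 ≤ c) {x : E}
    (hx : c • x ∈ s) : f (c • x) ≤ c * f x := by
  have hc0 : 0 < c := zero_lt_one.trans_le hc
  have hc1 : 0 ≤ 1 - c⁻¹ := sub_nonneg.2 (inv_le_one_of_one_le₀ hc)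
  have hcomb := hf.2 h0 hx hc1 (inv_nonneg.2 hc0.le) (sub_add_cancel _ _)
  rw [smul_zero, zero_add, inv_smul_smul₀ hc0.ne', smul_eq_mul, smul_eq_mul] at hcomb
  rw [← inv_mul_le_iff₀ hc0]
  linarith [mul_nonneg hc1 hf0]

lemma monotoneOn_of_concaveOn_Ici_of_bddBelow {f : ℝ → ℝ} {a : ℝ}
    (hf : ConcaveOn ℝ (Set.Ici a) f) (hbdd : BddBelow (f '' Set.Ici a)) :
    MonotoneOn f (Set.Ici a) := by
  obtain ⟨m, hm⟩ := hbdd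
  intro x hx y hy hxy
  by_contra! hlt
  have hxy' : x < y := hxy.lt_of_ne (by rintro rfl; exact hlt.false)
  have hmy : m ≤ f y := hm (Set.mem_image_of_mem f hy)
  -- The secant line through `x` and `y` takes the value `m - 1` at `z`.
  set z := y + (y - x) * (f y - m + 1) / (f x - f y) with hz
  have hyz : y < z :=
    lt_add_of_pos_right y (div_pos (mul_pos (by linarith) (by linarith)) (by linarith))
  have hza : z ∈ Set.Ici a := le_trans hy hyz.le
  have hslope := hf.slope_anti_adjacent hx hza hxy' hyz
  rw [div_le_iff₀ (sub_pos.2 hyz)] at hslope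
  have hsecant : (f y - f x) / (y - x) * (z - y) = -(f y - m + 1) := by
    have h₁ : y - x ≠ 0 := (sub_pos.2 hxy').ne'
    have h₂ : f x - f y ≠ 0 := (sub_pos.2 hlt).ne'
    rw [hz]
    field_simp
    ring
  linarith [hm (Set.mem_image_of_mem f hza)]

end Convexity

section ConcaveQuadrant

variable {α : ℝ → ℝ → ℝ}
  (hconc : ConcaveOn ℝ (Set.Ici (0 : ℝ) ×ˢ Set.Ici (0 : ℝ)) fun p => α p.1 p.2)
  (hnonneg : ∀ u v : ℝ, 0 ≤ u → 0 ≤ v → 0 ≤ α u v)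

include hconc hnonneg

lemma monotoneOn_right_of_concaveOn_quadrant {u : ℝ} (hu : 0 ≤ u) :
    MonotoneOn (α u) (Set.Ici 0) := by
  refine monotoneOn_of_concaveOn_Ici_of_bddBelow ⟨convex_Ici 0, ?_⟩ ⟨0, ?_⟩
  · intro x hx y hy a b ha hb hab
    simpa [← add_mul, hab] using
      hconc.2 (Set.mk_mem_prod hu hx) (Set.mk_mem_prod hu hy) ha hb hab
  · rintro _ ⟨v, hv, rfl⟩
    exact hnonneg u v hu hv

lemma map_mul_mul_le_of_concaveOn_quadrant {c u v : ℝ} (hc : 1 ≤ c) (hu : 0 ≤ u) (hv : 0 ≤ v) :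
    α (c * u) (c * v) ≤ c * α u v := by
  have hc0 : 0 ≤ c := zero_le_one.trans hc
  exact map_smul_le_of_concaveOn hconc (Set.mk_mem_prod Set.self_mem_Ici Set.self_mem_Ici)
    (hnonneg 0 0 le_rfl le_rfl) hc (x := (u, v))
    (Set.mk_mem_prod (mul_nonneg hc0 hu) (mul_nonneg hc0 hv))

lemma le_mul_map_one_one_of_concaveOn_quadrant {r s : ℝ} (hr : 0 ≤ r) (hrs : r ≤ s)
    (hs : 1 ≤ s) : α s r ≤ s * α 1 1 := by
  have hs0 : 0 ≤ s := zero_le_one.trans hs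
  calc
    α s r ≤ α s s := monotoneOn_right_of_concaveOn_quadrant hconc hnonneg hs0 hr hs0 hrs
    _ ≤ s * α 1 1 := by
      simpa using
        map_mul_mul_le_of_concaveOn_quadrant hconc hnonneg hs zero_le_one zero_le_one

lemma tendsto_div_of_concaveOn_quadrant (hrec : Tendsto (fun r => α r 1 / r) atTop (nhds 0))
    {t : ℝ} (ht : 1 ≤ t) : Tendsto (fun s => α s t / s) atTop (nhds 0) := by
  have ht0 : 0 < t := zero_lt_one.trans_le ht
  have hlim := hrec.comp (tendsto_id.atTop_div_const ht0)
  refine squeeze_zero' ?_ ?_ hlim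
  · filter_upwards [eventually_ge_atTop 0] with s hs
    exact div_nonneg (hnonneg s t hs ht0.le) hs
  · filter_upwards [eventually_gt_atTop 0] with s hs
    have hscale := map_mul_mul_le_of_concaveOn_quadrant hconc hnonneg ht
      (div_nonneg hs.le ht0.le) zero_le_one
    rw [mul_div_cancel₀ s ht0.ne', mul_one] at hscale
    calc
      α s t / s ≤ t * α (s / t) 1 / s := div_le_div_of_nonneg_right hscale hs.le
      _ = α (s / t) 1 / (s / t) := by field_simp

lemma eventually_forall_le_mul_le_of_concaveOn_quadrant
    (hrec : Tendsto (fun r => α r 1 / r) atTop (nhds 0)) {c : ℝ} (hc : 0 ≤ c) (t : ℝ) :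
    ∀ᶠ s in atTop, ∀ r ≤ t, 0 ≤ r → c * α s r ≤ s := by
  have hlim : Tendsto (fun s => c * (α s (max t 1) / s)) atTop (nhds 0) := by
    simpa using (tendsto_div_of_concaveOn_quadrant hconc hnonneg hrec
      (le_max_right t 1)).const_mul c
  filter_upwards [hlim.eventually_le_const zero_lt_one, eventually_gt_atTop 0]
    with s hs hs0 r hrt hr
  rw [← mul_div_assoc, div_le_one hs0] at hs
  have hrt' : r ≤ max t 1 := le_max_of_le_left hrt
  exact (mul_le_mul_of_nonneg_left (monotoneOn_right_of_concaveOn_quadrant hconc hnonneg hs0.le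
    hr (hr.trans hrt') hrt') hc).trans hs

end ConcaveQuadrant

section Staircase

/-- The smooth staircase with one step of height `1` on each interval `[T n, T n + 1]`; it provides
arbitrarily slow smooth growth. The sum is locally finite if `T` tends to infinity; otherwise `∑ᶠ`
may take the junk value `0`. -/
noncomputable def smoothStaircase (T : ℕ → ℝ) (s : ℝ) : ℝ :=
  ∑ᶠ n, Real.smoothTransition (s - T n)

variable {T : ℕ → ℝ} {s : ℝ} {N : ℕ}

lemma smoothStaircase_nonneg (T : ℕ → ℝ) (s : ℝ) : 0 ≤ smoothStaircase T s :=
  finsum_nonneg fun _ => Real.smoothTransition.nonneg _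

lemma smoothStaircase_eq_sum_range (hs : ∀ n ≥ N, s ≤ T n) :
    smoothStaircase T s = ∑ n ∈ Finset.range N, Real.smoothTransition (s - T n) := by
  refine finsum_eq_sum_of_support_subset _ fun n hn => ?_
  by_contra hnN
  exact hn (Real.smoothTransition.zero_of_nonpos
    (sub_nonpos.2 (hs n (by simpa using hnN))))

lemma smoothStaircase_le_natCast (hs : ∀ n ≥ N, s ≤ T n) : smoothStaircase T s ≤ N := by
  rw [smoothStaircase_eq_sum_range hs]
  simpa using Finset.sum_le_card_nsmul (Finset.range N) _ 1
    fun n _ => Real.smoothTransition.le_one (s - T n)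

variable (hT : Tendsto T atTop atTop)

include hT

lemma natCast_le_smoothStaircase (hs : ∀ n < N, T n + 1 ≤ s) : (N : ℝ) ≤ smoothStaircase T s := by
  obtain ⟨M, hM⟩ := eventually_atTop.1 (hT.eventually_ge_atTop s)
  rw [smoothStaircase_eq_sum_range hM]
  have hNM : N ≤ M := by
    by_contra! hlt
    linarith [hs M hlt, hM M le_rfl]
  calc
    (N : ℝ) = ∑ n ∈ Finset.range N, Real.smoothTransition (s - T n) := by
      rw [Finset.sum_congr rfl fun n hn => Real.smoothTransition.one_of_one_le
        (le_sub_iff_add_le'.2 (hs n (Finset.mem_range.1 hn)))]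
      simp
    _ ≤ ∑ n ∈ Finset.range M, Real.smoothTransition (s - T n) :=
      Finset.sum_le_sum_of_subset_of_nonneg (Finset.range_mono hNM)
        fun _ _ _ => Real.smoothTransition.nonneg _

lemma monotone_smoothStaircase : Monotone (smoothStaircase T) := by
  intro r s hrs
  obtain ⟨N, hN⟩ := eventually_atTop.1 (hT.eventually_ge_atTop s)
  rw [smoothStaircase_eq_sum_range hN,
    smoothStaircase_eq_sum_range fun n hn => hrs.trans (hN n hn)]
  exact Finset.sum_le_sum fun n _ =>
    Real.smoothTransition.monotone (sub_le_sub_right hrs (T n))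

lemma contDiff_smoothStaircase : ContDiff ℝ (⊤ : ℕ∞) (smoothStaircase T) := by
  refine contDiff_iff_contDiffAt.2 fun s => ?_
  obtain ⟨N, hN⟩ := eventually_atTop.1 (hT.eventually_ge_atTop (s + 1))
  have hsum : ContDiff ℝ (⊤ : ℕ∞)
      fun x => ∑ n ∈ Finset.range N, Real.smoothTransition (x - T n) :=
    ContDiff.sum fun n _ => Real.smoothTransition.contDiff.comp (contDiff_id.sub contDiff_const)
  refine hsum.contDiffAt.congr_of_eventuallyEq ?_
  filter_upwards [eventually_lt_nhds (lt_add_one s)] with x hx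
  exact smoothStaircase_eq_sum_range fun n hn => hx.le.trans (hN n hn)

lemma tendsto_smoothStaircase_atTop : Tendsto (smoothStaircase T) atTop atTop := by
  refine tendsto_atTop.2 fun y => ?_
  obtain ⟨N, hN⟩ := exists_nat_ge y
  have hsteps : ∀ᶠ s in atTop, ∀ n ∈ Finset.range N, T n + 1 ≤ s :=
    (eventually_all_finset _).2 fun n _ => eventually_ge_atTop (T n + 1)
  filter_upwards [hsteps] with s hs
  exact hN.trans (natCast_le_smoothStaircase hT fun n hn => hs n (Finset.mem_range.2 hn))

end Staircase

section SlowFunction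

lemma exists_seq_forall_of_forall_eventually {X : Type*} {l : Filter X} [l.NeBot]
    {R : ℕ → X → X → Prop} (hR : ∀ n x, ∀ᶠ y in l, R n x y) :
    ∃ u : ℕ → X, ∀ n, R n (u n) (u (n + 1)) := by
  choose next hnext using fun n x => (hR n x).exists
  obtain ⟨x₀⟩ := l.nonempty_of_neBot
  exact ⟨fun n => Nat.rec x₀ next n, fun n => hnext n _⟩

lemma exists_contDiff_monotone_slowly_increasing {P : ℕ → ℝ → ℝ → Prop} {Q : ℕ → ℝ → Prop}
    (hP : ∀ n t, ∀ᶠ s in atTop, ∀ r ≤ t, P n r s) (hQ : ∀ n, ∀ᶠ s in atTop, Q n s) :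
    ∃ H : ℝ → ℝ, ContDiff ℝ (⊤ : ℕ∞) H ∧ Monotone H ∧ (∀ s, 0 ≤ H s) ∧
      Tendsto H atTop atTop ∧
      (∀ s, H s = 0 ∨ ∃ n : ℕ, H s ≤ n ∧ Q n s) ∧
      ∀ r s, H s ≤ H r + 1 ∨ ∃ n : ℕ, H s ≤ n ∧ P n r s := by
  obtain ⟨U, hU⟩ : ∃ U : ℕ → ℝ, ∀ n : ℕ, n ≤ U (n + 1) ∧ U n ≤ U (n + 1) ∧
      ∀ s ≥ U (n + 1), Q (n + 1) s ∧ ∀ r ≤ U n + 1, P (n + 1) r s :=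
    exists_seq_forall_of_forall_eventually fun n t =>
      (eventually_ge_atTop (n : ℝ)).and <| (eventually_ge_atTop t).and <|
        eventually_forall_ge_atTop.2 ((hQ (n + 1)).and (hP (n + 1) (t + 1)))
  have hUmono : Monotone U := monotone_nat_of_le_succ fun n => (hU n).2.1
  let T : ℕ → ℝ := fun n => U (n + 1)
  have hT : Tendsto T atTop atTop :=
    tendsto_atTop_mono (fun n => (hU n).1) tendsto_natCast_atTop_atTop
  have hle {s : ℝ} {N : ℕ} (hs : s ≤ T N) : smoothStaircase T s ≤ N :=
    smoothStaircase_le_natCast fun n hn => hs.trans (hUmono (Nat.succ_le_succ hn))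
  have hlast (s : ℝ) :
      smoothStaircase T s = 0 ∨ ∃ k : ℕ, T k < s ∧ smoothStaircase T s ≤ (k + 1 : ℕ) := by
    rcases le_or_gt s (T 0) with hs | hs
    · exact .inl (le_antisymm (by simpa using hle hs) (smoothStaircase_nonneg T s))
    · obtain ⟨k, hk, hk'⟩ := Nat.exists_not_and_succ_of_not_zero_of_exists (p := fun n => s ≤ T n)
        hs.not_ge (hT.eventually_ge_atTop s).exists
      exact .inr ⟨k, not_le.1 hk, hle hk'⟩
  refine ⟨smoothStaircase T, contDiff_smoothStaircase hT, monotone_smoothStaircase hT,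
    smoothStaircase_nonneg T, tendsto_smoothStaircase_atTop hT, fun s => ?_, fun r s => ?_⟩
  · exact (hlast s).imp_right fun ⟨k, hks, hk⟩ => ⟨k + 1, hk, ((hU k).2.2 s hks.le).1⟩
  · rcases hlast s with hs | ⟨k, hks, hk⟩
    · exact .inl (by linarith [smoothStaircase_nonneg T r])
    rcases le_total r (U k + 1) with hr | hr
    · exact .inr ⟨k + 1, hk, ((hU k).2.2 s hks.le).2 r hr⟩
    · have hkr : (k : ℝ) ≤ smoothStaircase T r :=
        natCast_le_smoothStaircase hT fun n hn => by linarith [hUmono (Nat.succ_le_of_lt hn)]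
      exact .inl (by push_cast at hk; linarith)

end SlowFunction

section Primitive

lemma exists_contDiff_deriv_eq {h : ℝ → ℝ} (hh : ContDiff ℝ (⊤ : ℕ∞) h) :
    ∃ ω : ℝ → ℝ, ContDiff ℝ (⊤ : ℕ∞) ω ∧ ω 0 = 0 ∧ deriv ω = h := by
  have hderiv (s : ℝ) : HasDerivAt (fun s => ∫ x in (0 : ℝ)..s, h x) (h s) s :=
    (hh.continuous.integral_hasStrictDerivAt 0 s).hasDerivAt
  have hderiv_eq : deriv (fun s => ∫ x in (0 : ℝ)..s, h x) = h := funext fun s => (hderiv s).deriv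
  refine ⟨_, contDiff_infty_iff_deriv.2 ⟨fun s => (hderiv s).differentiableAt, ?_⟩,
    intervalIntegral.integral_same, hderiv_eq⟩
  rwa [hderiv_eq]

lemma sub_le_deriv_mul_sub_of_monotone_deriv {f : ℝ → ℝ} (hf : Differentiable ℝ f)
    (hmono : Monotone (deriv f)) {x y : ℝ} (hxy : x ≤ y) : f y - f x ≤ deriv f y * (y - x) :=
  (convex_Iic y).image_sub_le_mul_sub_of_deriv_le hf.continuous.continuousOn
    hf.differentiableOn (fun _ hz => hmono (Set.mem_Iic.1 (interior_subset hz))) x hxy y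
    Set.self_mem_Iic hxy

lemma tendsto_div_self_atTop_of_tendsto_deriv {f : ℝ → ℝ} (hf : Differentiable ℝ f)
    (hlim : Tendsto (deriv f) atTop atTop) : Tendsto (fun x => f x / x) atTop atTop := by
  refine tendsto_atTop.2 fun C => ?_
  obtain ⟨A, hA⟩ := eventually_atTop.1 (hlim.eventually_ge_atTop (C + 1))
  filter_upwards [eventually_ge_atTop A, eventually_ge_atTop ((C + 1) * A - f A),
    eventually_gt_atTop 0] with x hAx hx hx0
  have hgrowth : (C + 1) * (x - A) ≤ f x - f A :=
    (convex_Ici A).mul_sub_le_image_sub_of_le_deriv hf.continuous.continuousOn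
      hf.differentiableOn (fun z hz => hA z (interior_subset hz)) A Set.self_mem_Ici x hAx hAx
  rw [le_div_iff₀ hx0]
  linarith

end Primitive

section Entropy

lemma exists_pos_mul_le_one_of_continuousAt {f : ℝ → ℝ} (hf : ContinuousAt f 0) (hf0 : f 0 = 0)
    (c : ℝ) : ∃ a > 0, f a * c ≤ 1 := by
  have hlim : Tendsto (fun x => f x * c) (nhds 0) (nhds 0) := by
    simpa [hf0] using hf.tendsto.mul_const c
  have hsmall : ∀ᶠ x in nhdsWithin 0 (Set.Ioi 0), f x * c ≤ 1 :=
    (hlim.eventually_le_const zero_lt_one).filter_mono nhdsWithin_le_nhds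
  exact (eventually_mem_nhdsWithin.and hsmall).exists

variable {Ψ : ℝ → ℝ} {α : ℝ → ℝ → ℝ} {β : ℝ → ℝ}
  (hΨconv : ConvexOn ℝ Set.univ Ψ) (hΨeven : Ψ.Even) (hΨzero : Ψ 0 = 0)
  (hαconc : ConcaveOn ℝ (Set.Ici (0 : ℝ) ×ˢ Set.Ici (0 : ℝ)) fun p => α p.1 p.2)
  (hαnonneg : ∀ u v : ℝ, 0 ≤ u → 0 ≤ v → 0 ≤ α u v)

include hΨconv hΨeven hΨzero hαconc hαnonneg

lemma map_sub_mul_le_of_slowly_increasing {H : ℝ → ℝ} {a : ℝ} (ha : 0 ≤ a)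
    (haΨ : Ψ a * α 1 1 ≤ 1) (hHmono : Monotone H) (hHnonneg : ∀ s, 0 ≤ H s)
    (hHzero : ∀ s, H s = 0 ∨ 1 ≤ s)
    (hHstep : ∀ r s, H s ≤ H r + 1 ∨ ∃ n : ℕ, H s ≤ n ∧ (0 ≤ r → Ψ (a * n) * α s r ≤ s))
    {r s : ℝ} (hr : 0 ≤ r) (hrs : r ≤ s) : Ψ (a * H s - a * H r) * α s r ≤ s := by
  have hs : 0 ≤ s := hr.trans hrs
  have hα : 0 ≤ α s r := hαnonneg s r hs hr
  have hΨ {c : ℝ} (hc : H s - H r ≤ c) : Ψ (a * H s - a * H r) ≤ Ψ (a * c) := by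
    have hdiff : 0 ≤ H s - H r := sub_nonneg.2 (hHmono hrs)
    refine le_of_abs_le_abs_of_convexOn_of_even hΨconv hΨeven ?_
    rw [← mul_sub]
    exact abs_le_abs_of_nonneg (mul_nonneg ha hdiff) (mul_le_mul_of_nonneg_left hc ha)
  rcases hHzero s with hs0 | hs1
  · have hr0 : H r = 0 := le_antisymm ((hHmono hrs).trans hs0.le) (hHnonneg r)
    simpa [hs0, hr0, hΨzero] using hs
  rcases hHstep r s with hnear | ⟨n, hn, hfar⟩
  · calc
      Ψ (a * H s - a * H r) * α s r ≤ Ψ a * (s * α 1 1) :=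
        mul_le_mul (by simpa using hΨ (sub_le_iff_le_add'.2 hnear))
          (le_mul_map_one_one_of_concaveOn_quadrant hαconc hαnonneg hr hrs hs1) hα
          (nonneg_of_convexOn_of_even hΨconv hΨeven hΨzero a)
      _ = s * (Ψ a * α 1 1) := by ring
      _ ≤ s := mul_le_of_le_one_right hs haΨ
  · exact (mul_le_mul_of_nonneg_right (hΨ (by linarith [hHnonneg r])) hα).trans (hfar hr)

variable (hαsymm : ∀ u v : ℝ, 0 ≤ u → 0 ≤ v → α u v = α v u)
  (hαrec : Tendsto (fun r : ℝ => α r 1 / r) atTop (nhds 0))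
  (hβnonneg : ∀ r : ℝ, 0 ≤ r → 0 ≤ β r)
  (hβsuper : Tendsto (fun r : ℝ => β r / r) atTop atTop)

include hαsymm hαrec hβnonneg hβsuper

lemma exists_slowly_increasing_entropy_deriv :
    ∃ h : ℝ → ℝ, ContDiff ℝ (⊤ : ℕ∞) h ∧ Monotone h ∧ (∀ s, 0 ≤ h s) ∧
      Tendsto h atTop atTop ∧ (∀ r : ℝ, 0 ≤ r → h r * r ≤ β r) ∧
      ∀ r s : ℝ, 0 ≤ r → 0 ≤ s → Ψ (h s - h r) * α s r ≤ r + s := by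
  have hΨcont : ContinuousAt Ψ 0 :=
    (hΨconv.continuousOn isOpen_univ).continuousAt univ_mem
  obtain ⟨a, ha, haΨ⟩ := exists_pos_mul_le_one_of_continuousAt hΨcont hΨzero (α 1 1)
  have hfar (n : ℕ) (t : ℝ) : ∀ᶠ s in atTop, ∀ r ≤ t, 0 ≤ r → Ψ (a * n) * α s r ≤ s :=
    eventually_forall_le_mul_le_of_concaveOn_quadrant hαconc hαnonneg hαrec
      (nonneg_of_convexOn_of_even hΨconv hΨeven hΨzero _) t
  have hbelow (n : ℕ) : ∀ᶠ s in atTop, 1 ≤ s ∧ a * n * s ≤ β s := by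
    filter_upwards [hβsuper.eventually_ge_atTop (a * n), eventually_ge_atTop 1] with s hs hs1
    exact ⟨hs1, (le_div_iff₀ (zero_lt_one.trans_le hs1)).1 hs⟩
  obtain ⟨H, hHsmooth, hHmono, hHnonneg, hHlim, hHbelow, hHstep⟩ :=
    exists_contDiff_monotone_slowly_increasing hfar hbelow
  have hHzero (s : ℝ) : H s = 0 ∨ 1 ≤ s := (hHbelow s).imp_right fun ⟨_, _, hs, _⟩ => hs
  have hordered {r s : ℝ} (hr : 0 ≤ r) (hrs : r ≤ s) : Ψ (a * H s - a * H r) * α s r ≤ s :=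
    map_sub_mul_le_of_slowly_increasing hΨconv hΨeven hΨzero hαconc hαnonneg ha.le haΨ hHmono
      hHnonneg hHzero hHstep hr hrs
  refine ⟨fun s => a * H s, contDiff_const.mul hHsmooth, hHmono.const_mul ha.le,
    fun s => mul_nonneg ha.le (hHnonneg s), hHlim.const_mul_atTop ha, fun r hr => ?_,
    fun r s hr hs => ?_⟩
  · rcases hHbelow r with hr0 | ⟨n, hn, -, hβ⟩
    · simpa [hr0] using hβnonneg r hr
    · exact (mul_le_mul_of_nonneg_right (mul_le_mul_of_nonneg_left hn ha.le) hr).trans hβ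
  · rcases le_total r s with hrs | hsr
    · linarith [hordered hr hrs]
    · rw [← hΨeven, neg_sub, hαsymm s r hs hr]
      linarith [hordered hs hsr]

end Entropy

theorem slowly_increasing_entropy_general {Ψ : ℝ → ℝ} {α : ℝ → ℝ → ℝ} {β : ℝ → ℝ}
    (hΨconv : ConvexOn ℝ Set.univ Ψ) (hΨeven : Ψ.Even) (hΨzero : Ψ 0 = 0)
    (hαconc : ConcaveOn ℝ (Set.Ici (0 : ℝ) ×ˢ Set.Ici (0 : ℝ)) fun p => α p.1 p.2)
    (hαnonneg : ∀ u v : ℝ, 0 ≤ u → 0 ≤ v → 0 ≤ α u v)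
    (hαsymm : ∀ u v : ℝ, 0 ≤ u → 0 ≤ v → α u v = α v u)
    (hαrec : Tendsto (fun r : ℝ => α r 1 / r) atTop (nhds 0))
    (hβnonneg : ∀ r : ℝ, 0 ≤ r → 0 ≤ β r)
    (hβsuper : Tendsto (fun r : ℝ => β r / r) atTop atTop) :
    ∃ ω : ℝ → ℝ, ContDiff ℝ (⊤ : ℕ∞) ω ∧ ConvexOn ℝ (Set.Ici 0) ω ∧
      (∀ r : ℝ, 0 ≤ r → 0 ≤ ω r) ∧
      Tendsto (fun r : ℝ => ω r / r) atTop atTop ∧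
      (∀ r : ℝ, 0 ≤ r → ω r ≤ β r) ∧
      (∀ r s : ℝ, 0 ≤ r → 0 ≤ s → Ψ (deriv ω s - deriv ω r) * α s r ≤ r + s) := by
  obtain ⟨h, hsmooth, hmono, hnonneg, hlim, hβ, hΨα⟩ := exists_slowly_increasing_entropy_deriv
    hΨconv hΨeven hΨzero hαconc hαnonneg hαsymm hαrec hβnonneg hβsuper
  obtain ⟨ω, hω, hω0, rfl⟩ := exists_contDiff_deriv_eq hsmooth
  have hdiff : Differentiable ℝ ω := (contDiff_infty_iff_deriv.1 hω).1
  refine ⟨ω, hω, (hmono.convexOn_univ_of_deriv hdiff).subset (Set.subset_univ _) (convex_Ici 0),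
    fun r hr => ?_, tendsto_div_self_atTop_of_tendsto_deriv hdiff hlim, fun r hr => ?_, hΨα⟩
  · exact hω0.ge.trans (monotone_of_deriv_nonneg hdiff hnonneg hr)
  · have htangent := sub_le_deriv_mul_sub_of_monotone_deriv hdiff hmono hr
    rw [hω0, sub_zero, sub_zero] at htangent
    exact htangent.trans (hβ r hr)

/-- Slowly increasing superlinear entropies: existence of a smooth convex superlinear
minorant `ω` of `β` such that `Ψ*(ω'(s) − ω'(r))·α(s,r) ≤ r + s`. -/
theorem slowly_increasing_entropy
    (Ψstar : ℝ → ℝ) (α : ℝ → ℝ → ℝ) (β : ℝ → ℝ)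
    (hΨconv : ConvexOn ℝ Set.univ Ψstar)
    (hΨdiff : Differentiable ℝ Ψstar)
    (hΨeven : ∀ ξ : ℝ, Ψstar (-ξ) = Ψstar ξ)
    (hΨnonneg : ∀ ξ : ℝ, 0 ≤ Ψstar ξ)
    (hΨzero : Ψstar 0 = 0)
    (hΨsuper_top : Tendsto (fun ξ : ℝ => Ψstar ξ / |ξ|) atTop atTop)
    (hΨsuper_bot : Tendsto (fun ξ : ℝ => Ψstar ξ / |ξ|) atBot atTop)
    (hαcont : ContinuousOn (fun p : ℝ × ℝ => α p.1 p.2) (Set.Ici (0:ℝ) ×ˢ Set.Ici (0:ℝ)))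
    (hαconc : ConcaveOn ℝ (Set.Ici (0:ℝ) ×ˢ Set.Ici (0:ℝ)) (fun p => α p.1 p.2))
    (hαsymm : ∀ u v : ℝ, 0 ≤ u → 0 ≤ v → α u v = α v u)
    (hαnonneg : ∀ u v : ℝ, 0 ≤ u → 0 ≤ v → 0 ≤ α u v)
    (hαne : ∃ u v : ℝ, 0 ≤ u ∧ 0 ≤ v ∧ α u v ≠ 0)
    (hαrec : Tendsto (fun r : ℝ => α r 1 / r) atTop (nhds 0))
    (hβconv : ConvexOn ℝ (Set.Ici 0) β)
    (hβnonneg : ∀ r : ℝ, 0 ≤ r → 0 ≤ β r)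
    (hβsuper : Tendsto (fun r : ℝ => β r / r) atTop atTop)
    (hβslope : ∃ β₀' : ℝ, 0 < β₀' ∧
      ∀ r s : ℝ, 0 ≤ r → r ≤ s → β₀' * (s - r) ≤ β s - β r) :
    ∃ ω : ℝ → ℝ, ContDiff ℝ (⊤ : ℕ∞) ω ∧ ConvexOn ℝ (Set.Ici 0) ω ∧
      (∀ r : ℝ, 0 ≤ r → 0 ≤ ω r) ∧
      Tendsto (fun r : ℝ => ω r / r) atTop atTop ∧
      (∀ r : ℝ, 0 ≤ r → ω r ≤ β r) ∧
      (∀ r s : ℝ, 0 ≤ r → 0 ≤ s →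
        Ψstar (deriv ω s - deriv ω r) * α s r ≤ r + s) :=
  slowly_increasing_entropy_general hΨconv hΨeven hΨzero hαconc hαnonneg hαsymm hαrec
    hβnonneg hβsuper
end

section
/- Let X and Y be measurable spaces, and let κ be a bounded measurable kernel from X to Y: for every x ∈ X, κ(x,·) is a finite nonnegative measure on Y, for every measurable B ⊆ Y the map x ↦ κ(x,B) is measurable, and sup_{x∈X} κ(x,Y) < +∞. For a finite nonnegative measure μ on X let κ_μ be the measure on X×Y determined by κ_μ(A×B) = ∫_A κ(x,B) μ(dx). If (μₙ) is a sequence of finite nonnegative measures on X converging setwise to a finite measure μ, i.e. μₙ(B) → μ(B) for every measurable B ⊆ X, then κ_{μₙ} converges setwise to κ_μ: κ_{μₙ}(C) → κ_μ(C) for every measurable C ⊆ X×Y. -/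
open MeasureTheory ProbabilityTheory Filter

/-! Integrating a bounded measurable function is continuous for setwise convergence, and
`(μ ⊗ₘ κ) C` is the integral against `μ` of the bounded function `x ↦ κ x {y | (x, y) ∈ C}`.
For the continuity, approximation by simple functions from below shows that
`∫⁻ x, f x ∂μlim ≤ liminf ∫⁻ x, f x ∂μ i` for every `f ≥ 0`. When `f ≤ c`, this applies to both `f`
and `c - f`, whose integrals against `μ i` add up to `c * μ i univ → c * μlim univ`, and the lower
bound for `c - f` becomes the matching upper bound for `f`. -/

open scoped ENNReal NNReal Topology

theorem ennreal_limsup_add_liminf_le_limsup_add {ι : Type*} {l : Filter ι} [l.NeBot]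
    (u v : ι → ℝ≥0∞) : limsup u l + liminf v l ≤ limsup (fun i ↦ u i + v i) l := by
  rw [liminf_eq, ENNReal.add_sSup ⟨0, .of_forall fun _ ↦ zero_le⟩]
  refine iSup₂_le fun c hc ↦ ?_
  calc limsup u l + c = limsup (fun i ↦ u i + c) l :=
        (limsup_add_const l u c (by isBoundedDefault) (by isBoundedDefault)).symm
    _ ≤ limsup (fun i ↦ u i + v i) l :=
        limsup_le_limsup (hc.mono fun _ hci ↦ add_le_add_right hci _)

theorem ennreal_tendsto_of_tendsto_add_of_le_liminf {ι : Type*} {l : Filter ι} {u v : ι → ℝ≥0∞}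
    {a b : ℝ≥0∞} (hb : b ≠ ∞) (hadd : Tendsto (fun i ↦ u i + v i) l (𝓝 (a + b)))
    (hu : a ≤ liminf u l) (hv : b ≤ liminf v l) : Tendsto u l (𝓝 a) := by
  rcases l.eq_or_neBot with rfl | _
  · exact tendsto_bot
  have h_limsup : limsup u l + b ≤ a + b :=
    calc limsup u l + b ≤ limsup u l + liminf v l := by gcongr
      _ ≤ limsup (fun i ↦ u i + v i) l := ennreal_limsup_add_liminf_le_limsup_add u v
      _ = a + b := hadd.limsup_eq
  exact tendsto_of_le_liminf_of_limsup_le hu ((ENNReal.add_le_add_iff_right hb).1 h_limsup)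

/-- Setwise convergence of measures along a filter: the measures of every measurable set converge.
The index filter is arbitrary, so that sequences and nets are treated alike. -/
def TendstoSetwise {ι X : Type*} [MeasurableSpace X] (μ : ι → Measure X) (l : Filter ι)
    (μlim : Measure X) : Prop :=
  ∀ B : Set X, MeasurableSet B → Tendsto (fun i ↦ μ i B) l (𝓝 (μlim B))

namespace TendstoSetwise

variable {ι X : Type*} [MeasurableSpace X] {l : Filter ι} {μ : ι → Measure X} {μlim : Measure X}

theorem eventually_isFiniteMeasure [IsFiniteMeasure μlim] (h : TendstoSetwise μ l μlim) :
    ∀ᶠ i in l, IsFiniteMeasure (μ i) :=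
  ((h _ .univ).eventually_lt_const (measure_lt_top _ _)).mono fun _ ↦ .mk

theorem tendsto_simpleFunc_lintegral (h : TendstoSetwise μ l μlim) (φ : SimpleFunc X ℝ≥0) :
    Tendsto (fun i ↦ (φ.map ((↑) : ℝ≥0 → ℝ≥0∞)).lintegral (μ i)) l
      (𝓝 ((φ.map ((↑) : ℝ≥0 → ℝ≥0∞)).lintegral μlim)) := by
  simp only [SimpleFunc.map_lintegral]
  exact tendsto_finsetSum _ fun c _ ↦
    ENNReal.Tendsto.const_mul (h _ (φ.measurableSet_fiber c)) (.inr ENNReal.coe_ne_top)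

theorem lintegral_le_liminf_lintegral (h : TendstoSetwise μ l μlim) (f : X → ℝ≥0∞) :
    ∫⁻ x, f x ∂μlim ≤ liminf (fun i ↦ ∫⁻ x, f x ∂μ i) l := by
  rw [lintegral_eq_nnreal]
  refine iSup₂_le fun φ hφ ↦ ?_
  rcases l.eq_or_neBot with rfl | _
  · simp
  rw [← (h.tendsto_simpleFunc_lintegral φ).liminf_eq]
  refine liminf_le_liminf (.of_forall fun i ↦ ?_)
  rw [lintegral_eq_nnreal]
  exact le_iSup₂_of_le φ hφ le_rfl

theorem tendsto_lintegral_of_le [IsFiniteMeasure μlim] (h : TendstoSetwise μ l μlim)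
    {f : X → ℝ≥0∞} (hf : Measurable f) {c : ℝ≥0∞} (hc : c ≠ ∞) (hfc : ∀ x, f x ≤ c) :
    Tendsto (fun i ↦ ∫⁻ x, f x ∂μ i) l (𝓝 (∫⁻ x, f x ∂μlim)) := by
  have h_add (ν : Measure X) : ∫⁻ x, f x ∂ν + ∫⁻ x, (c - f x) ∂ν = c * ν Set.univ := by
    simp only [← lintegral_add_left hf, add_tsub_cancel_of_le (hfc _), lintegral_const]
  have h_total : Tendsto (fun i ↦ ∫⁻ x, f x ∂μ i + ∫⁻ x, (c - f x) ∂μ i) l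
      (𝓝 (∫⁻ x, f x ∂μlim + ∫⁻ x, (c - f x) ∂μlim)) := by
    simp only [h_add]
    exact ENNReal.Tendsto.const_mul (h _ .univ) (.inr hc)
  have h_ne_top : ∫⁻ x, (c - f x) ∂μlim ≠ ∞ :=
    ne_top_of_le_ne_top (ENNReal.mul_ne_top hc (measure_ne_top _ _)) (h_add μlim ▸ le_add_self)
  exact ennreal_tendsto_of_tendsto_add_of_le_liminf h_ne_top h_total
    (h.lintegral_le_liminf_lintegral f) (h.lintegral_le_liminf_lintegral fun x ↦ c - f x)

end TendstoSetwise

theorem kernel_comp_setwise_convergence_general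
    {ι X Y : Type*} [MeasurableSpace X] [MeasurableSpace Y] {l : Filter ι}
    (κ : Kernel X Y) [IsFiniteKernel κ]
    {μ : ι → Measure X} {μlim : Measure X} [IsFiniteMeasure μlim]
    (h : TendstoSetwise μ l μlim) :
    TendstoSetwise (fun i ↦ μ i ⊗ₘ κ) l (μlim ⊗ₘ κ) := by
  intro C hC
  have h_lintegral : Tendsto (fun i ↦ ∫⁻ x, κ x (Prod.mk x ⁻¹' C) ∂μ i) l
      (𝓝 (∫⁻ x, κ x (Prod.mk x ⁻¹' C) ∂μlim)) :=
    h.tendsto_lintegral_of_le (Kernel.measurable_kernel_prodMk_left hC) κ.bound_ne_top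
      fun x ↦ κ.measure_le_bound x _
  rw [Measure.compProd_apply hC]
  refine h_lintegral.congr' ?_
  filter_upwards [h.eventually_isFiniteMeasure] with i _
  exact (Measure.compProd_apply hC).symm

/-- Setwise convergence of measures is preserved by composition with a bounded
measurable kernel: if `μₙ → μ` setwise then `μₙ ⊗ₘ κ → μ ⊗ₘ κ` setwise. -/
theorem kernel_comp_setwise_convergence
    {X Y : Type*} [MeasurableSpace X] [MeasurableSpace Y]
    (κ : Kernel X Y) [IsFiniteKernel κ]
    (μ : ℕ → Measure X) (μlim : Measure X)
    [∀ n, IsFiniteMeasure (μ n)] [IsFiniteMeasure μlim]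
    (hsetwise : ∀ B : Set X, MeasurableSet B →
      Tendsto (fun n => μ n B) atTop (nhds (μlim B))) :
    ∀ C : Set (X × Y), MeasurableSet C →
      Tendsto (fun n => (μ n ⊗ₘ κ) C) atTop (nhds ((μlim ⊗ₘ κ) C)) :=
  kernel_comp_setwise_convergence_general κ hsetwise
end

section
/- Let X and Y be Polish spaces (separable completely metrizable topological spaces) with their Borel σ-algebras, and let κ be a bounded measurable kernel from X to Y (each κ(x,·) a finite measure, x ↦ κ(x,B) Borel measurable for each Borel B, sup_x κ(x,Y) < ∞) satisfying the weak Feller property: the map x ↦ κ(x,·) is continuous from X into the finite measures on Y equipped with the weak topology in duality with bounded continuous functions. For a finite nonnegative measure μ on X let κ_μ(dx dy) = μ(dx)κ(x,dy). If finite nonnegative measures μₙ converge weakly to μ (∫ f dμₙ → ∫ f dμ for every bounded continuous f: X → ℝ), then κ_{μₙ} converges weakly to κ_μ on X×Y (∫∫ g dκ_{μₙ} → ∫∫ g dκ_μ for every bounded continuous g: X×Y → ℝ). -/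
open MeasureTheory ProbabilityTheory Filter

/-!
Integrating out the second variable reduces the claim to the continuity of
`x ↦ ∫ g (x, y) κ(x, dy)`, a bounded function, which then serves as a test function for `μₙ → μ`.
For the continuity at `x₀`, continuity of measure gives a closed set `F` of small
`κ(x₀, ·)`-measure off which `g (x, ·)` is uniformly close to `g (x₀, ·)` for all `x` near `x₀`.
By the portmanteau theorem `κ(x, F)` stays small for `x` near `x₀`, so `g (x, ·)` may be replaced
by `g (x₀, ·)`, and the weak Feller property applies to the latter.
-/

open Set
open scoped Topology BoundedContinuousFunction ENNReal

section UniformApproximation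

variable {X Y E : Type*} [TopologicalSpace X] [TopologicalSpace Y] [PseudoMetricSpace E]
  {g : X × Y → E} {ε : ℝ}

lemma exists_mem_nhds_eventually_forall_dist_lt (hg : Continuous g) (hε : 0 < ε)
    (x₀ : X) (y₀ : Y) :
    ∃ U ∈ 𝓝 x₀, ∀ᶠ y in 𝓝 y₀, ∀ x ∈ U, dist (g (x, y)) (g (x₀, y)) < ε := by
  have hdist : Continuous fun q : X × Y => dist (g q) (g (x₀, q.2)) := by fun_prop
  have hclose : ∀ᶠ q in 𝓝 x₀ ×ˢ 𝓝 y₀, dist (g q) (g (x₀, q.2)) < ε := by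
    rw [← nhds_prod_eq]
    exact hdist.continuousAt.eventually_lt continuousAt_const (by simpa using hε)
  obtain ⟨U, hU, V, hV, hUV⟩ := eventually_prod_iff.1 hclose
  exact ⟨{x | U x}, hU, hV.mono fun y hy x hx => hUV hx hy⟩

lemma exists_mem_nhds_isClosed_measure_lt_forall_dist_le [MeasurableSpace Y]
    [OpensMeasurableSpace Y] (hg : Continuous g) (hε : 0 < ε) (x₀ : X)
    [(𝓝 x₀).IsCountablyGenerated] (ν : Measure Y) [IsFiniteMeasure ν] {δ : ℝ≥0∞} (hδ : 0 < δ) :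
    ∃ U ∈ 𝓝 x₀, ∃ F : Set Y, IsClosed F ∧ ν F < δ ∧
      ∀ x ∈ U, ∀ y ∉ F, dist (g (x, y)) (g (x₀, y)) ≤ ε := by
  obtain ⟨U, hU⟩ := (𝓝 x₀).exists_antitone_basis
  let A : ℕ → Set Y := fun n => {y | ∀ x ∈ U n, dist (g (x, y)) (g (x₀, y)) ≤ ε}
  have hA_mono : Monotone A := fun m n hmn y hy x hx => hy x (hU.antitone hmn hx)
  have hA_cover : ⋂ n, (interior (A n))ᶜ = ∅ := by
    rw [← compl_iUnion, compl_empty_iff]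
    refine eq_univ_of_forall fun y₀ => mem_iUnion.2 ?_
    obtain ⟨V, hV, hVε⟩ := exists_mem_nhds_eventually_forall_dist_lt hg hε x₀ y₀
    obtain ⟨n, hnV⟩ := hU.mem_iff.1 hV
    exact ⟨n, mem_interior_iff_mem_nhds.2 <| hVε.mono fun y hy x hx => (hy x (hnV hx)).le⟩
  have hA_lim : Tendsto (fun n => ν (interior (A n))ᶜ) atTop (𝓝 0) := by
    rw [← measure_empty (μ := ν), ← hA_cover]
    exact tendsto_measure_iInter_atTop
      (fun n => isOpen_interior.measurableSet.compl.nullMeasurableSet)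
      (fun m n hmn => compl_subset_compl.2 (interior_mono (hA_mono hmn)))
      ⟨0, measure_ne_top ν _⟩
  obtain ⟨n, hn⟩ := (hA_lim.eventually_lt_const hδ).exists
  exact ⟨U n, hU.mem n, (interior (A n))ᶜ, isOpen_interior.isClosed_compl, hn,
    fun x hx y hy => interior_subset (notMem_compl_iff.1 hy) x hx⟩

end UniformApproximation

lemma norm_integral_le_of_norm_le_const_of_norm_le_const_compl {Y E : Type*} [MeasurableSpace Y]
    [NormedAddCommGroup E] [NormedSpace ℝ E] {ν : Measure Y} [IsFiniteMeasure ν] {f : Y → E}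
    {F : Set Y} {C ε : ℝ} (hF : MeasurableSet F) (hε : 0 ≤ ε) (hC : ∀ y ∈ F, ‖f y‖ ≤ C)
    (hfε : ∀ y ∉ F, ‖f y‖ ≤ ε) :
    ‖∫ y, f y ∂ν‖ ≤ ε * ν.real univ + C * ν.real F := by
  have hbound (y : Y) : ‖f y‖ ≤ ε + F.indicator (fun _ => C) y := by
    by_cases hy : y ∈ F
    · simpa [hy] using (hC y hy).trans (le_add_of_nonneg_left hε)
    · simpa [hy] using hfε y hy
  have hint : Integrable (F.indicator fun _ => C) ν := (integrable_const C).indicator hF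
  calc ‖∫ y, f y ∂ν‖
      ≤ ∫ y, ε + F.indicator (fun _ => C) y ∂ν :=
        norm_integral_le_of_norm_le ((integrable_const ε).add hint) (.of_forall hbound)
    _ = ε * ν.real univ + C * ν.real F := by
        rw [integral_add (integrable_const ε) hint, integral_const, integral_indicator_const C hF,
          smul_eq_mul, smul_eq_mul, mul_comm ε, mul_comm C]

lemma norm_integral_kernel_le_mul_bound {X Y E : Type*} [MeasurableSpace X] [MeasurableSpace Y]
    [NormedAddCommGroup E] [NormedSpace ℝ E] (κ : Kernel X Y) [IsFiniteKernel κ]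
    {f : Y → E} {C : ℝ} (hf : ∀ y, ‖f y‖ ≤ C) (hC : 0 ≤ C) (x : X) :
    ‖∫ y, f y ∂(κ x)‖ ≤ C * κ.bound.toReal :=
  calc ‖∫ y, f y ∂(κ x)‖
      ≤ C * (κ x).real univ := norm_integral_le_of_norm_le_const (.of_forall hf)
    _ ≤ C * κ.bound.toReal := by
        gcongr
        exact ENNReal.toReal_mono κ.bound_ne_top (κ.measure_le_bound x univ)

section WeakConvergence

variable {X Y : Type*} [TopologicalSpace X] [TopologicalSpace Y] [HasOuterApproxClosed Y]
  [MeasurableSpace Y] [OpensMeasurableSpace Y]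

lemma tendsto_integral_prodMk_sub_of_tendsto_finiteMeasure {ι E : Type*} [NormedAddCommGroup E]
    [NormedSpace ℝ E] {L : Filter ι} {x : ι → X} {x₀ : X} [(𝓝 x₀).IsCountablyGenerated]
    {ν : ι → FiniteMeasure Y} {ν₀ : FiniteMeasure Y} (hx : Tendsto x L (𝓝 x₀))
    (hν : Tendsto ν L (𝓝 ν₀)) (g : X × Y →ᵇ E) :
    Tendsto (fun i => ∫ y, (g (x i, y) - g (x₀, y)) ∂(ν i : Measure Y)) L (𝓝 0) := by
  refine Metric.tendsto_nhds.2 fun η hη => ?_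
  let ε : ℝ := η / (2 * (ν₀.mass + 1))
  let δ : ℝ := η / (2 * (2 * ‖g‖ + 1))
  have hε : 0 < ε := by positivity
  have hδ : 0 < δ := by positivity
  obtain ⟨U, hU, F, hF, hFδ, hUF⟩ := exists_mem_nhds_isClosed_measure_lt_forall_dist_le
    g.continuous hε x₀ (ν₀ : Measure Y) (ENNReal.ofReal_pos.2 hδ)
  have hmass : ∀ᶠ i in L, ((ν i).mass : ℝ) < ν₀.mass + 1 :=
    (NNReal.tendsto_coe.2 hν.mass).eventually_lt_const (lt_add_one _)
  have hmeasF : ∀ᶠ i in L, (ν i : Measure Y) F < ENNReal.ofReal δ :=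
    eventually_lt_of_limsup_lt <|
      (FiniteMeasure.limsup_measure_closed_le_of_tendsto hν hF).trans_lt hFδ
  filter_upwards [hmass, hmeasF, hx hU] with i hmass_i hmeasF_i hxi
  rw [dist_zero_right]
  calc ‖∫ y, (g (x i, y) - g (x₀, y)) ∂(ν i : Measure Y)‖
      ≤ ε * (ν i).mass + 2 * ‖g‖ * (ν i : Measure Y).real F :=
        norm_integral_le_of_norm_le_const_of_norm_le_const_compl hF.measurableSet hε.le
          (fun y _ => by simpa only [dist_eq_norm] using g.dist_le_two_norm (x i, y) (x₀, y))
          (fun y hy => by simpa only [dist_eq_norm] using hUF (x i) hxi y hy)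
    _ < ε * (ν₀.mass + 1) + (2 * ‖g‖ + 1) * δ := by
        have hreal : (ν i : Measure Y).real F < δ := ENNReal.toReal_lt_of_lt_ofReal hmeasF_i
        gcongr
        linarith
    _ = η := by
        simp only [ε, δ]
        field_simp
        norm_num

lemma tendsto_integral_prodMk_of_tendsto_finiteMeasure {ι : Type*} {L : Filter ι}
    {x : ι → X} {x₀ : X} [(𝓝 x₀).IsCountablyGenerated] {ν : ι → FiniteMeasure Y}
    {ν₀ : FiniteMeasure Y} (hx : Tendsto x L (𝓝 x₀)) (hν : Tendsto ν L (𝓝 ν₀))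
    (g : X × Y →ᵇ ℝ) :
    Tendsto (fun i => ∫ y, g (x i, y) ∂(ν i : Measure Y)) L
      (𝓝 (∫ y, g (x₀, y) ∂(ν₀ : Measure Y))) := by
  let gAt (x : X) : Y →ᵇ ℝ := g.compContinuous ⟨fun y => (x, y), by fun_prop⟩
  have hfixed : Tendsto (fun i => ∫ y, g (x₀, y) ∂(ν i : Measure Y)) L
      (𝓝 (∫ y, g (x₀, y) ∂(ν₀ : Measure Y))) :=
    FiniteMeasure.tendsto_iff_forall_integral_tendsto.1 hν (gAt x₀)
  have hsub (i : ι) : ∫ y, (g (x i, y) - g (x₀, y)) ∂(ν i : Measure Y) =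
      ∫ y, g (x i, y) ∂(ν i : Measure Y) - ∫ y, g (x₀, y) ∂(ν i : Measure Y) :=
    integral_sub ((gAt (x i)).integrable _) ((gAt x₀).integrable _)
  simpa [hsub] using (tendsto_integral_prodMk_sub_of_tendsto_finiteMeasure hx hν g).add hfixed

variable [FirstCountableTopology X]

lemma continuous_integral_prodMk_of_continuous_finiteMeasure {ν : X → FiniteMeasure Y}
    (hν : Continuous ν) (g : X × Y →ᵇ ℝ) :
    Continuous fun x => ∫ y, g (x, y) ∂(ν x : Measure Y) :=
  continuous_iff_continuousAt.2 fun x₀ =>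
    tendsto_integral_prodMk_of_tendsto_finiteMeasure tendsto_id (hν.tendsto x₀) g

theorem kernel_comp_weak_convergence_general [MeasurableSpace X]
    [OpensMeasurableSpace (X × Y)] (κ : Kernel X Y) [IsFiniteKernel κ]
    (hFeller : ∀ g : Y →ᵇ ℝ, Continuous fun x => ∫ y, g y ∂(κ x))
    {ι : Type*} {L : Filter ι} (μ : ι → Measure X) (μlim : Measure X)
    [∀ i, IsFiniteMeasure (μ i)] [IsFiniteMeasure μlim]
    (hweak : ∀ f : X →ᵇ ℝ, Tendsto (fun i => ∫ x, f x ∂(μ i)) L (𝓝 (∫ x, f x ∂μlim)))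
    (g : X × Y →ᵇ ℝ) :
    Tendsto (fun i => ∫ p, g p ∂(μ i ⊗ₘ κ)) L (𝓝 (∫ p, g p ∂(μlim ⊗ₘ κ))) := by
  let K (x : X) : FiniteMeasure Y := ⟨κ x, inferInstance⟩
  have hK : Continuous K := FiniteMeasure.continuous_iff_forall_continuous_integral.2 hFeller
  have hbound (x : X) : ‖∫ y, g (x, y) ∂(κ x)‖ ≤ ‖g‖ * κ.bound.toReal :=
    norm_integral_kernel_le_mul_bound κ (fun y => g.norm_coe_le_norm (x, y)) (norm_nonneg g) x
  let f : X →ᵇ ℝ := .ofNormedAddCommGroup (fun x => ∫ y, g (x, y) ∂(κ x))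
    (continuous_integral_prodMk_of_continuous_finiteMeasure hK g) _ hbound
  have hcompProd (m : Measure X) [IsFiniteMeasure m] : ∫ p, g p ∂(m ⊗ₘ κ) = ∫ x, f x ∂m :=
    Measure.integral_compProd (g.integrable _)
  simpa only [hcompProd] using hweak f

end WeakConvergence

/-- Weak convergence of measures (in duality with bounded continuous functions) is
preserved by composition with a bounded kernel satisfying the weak Feller property. -/
theorem kernel_comp_weak_convergence
    {X Y : Type*}
    [TopologicalSpace X] [PolishSpace X] [MeasurableSpace X] [BorelSpace X]
    [TopologicalSpace Y] [PolishSpace Y] [MeasurableSpace Y] [BorelSpace Y]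
    (κ : Kernel X Y) [IsFiniteKernel κ]
    (hFeller : ∀ g : BoundedContinuousFunction Y ℝ,
      Continuous fun x => ∫ y, g y ∂(κ x))
    (μ : ℕ → Measure X) (μlim : Measure X)
    [∀ n, IsFiniteMeasure (μ n)] [IsFiniteMeasure μlim]
    (hweak : ∀ f : BoundedContinuousFunction X ℝ,
      Tendsto (fun n => ∫ x, f x ∂(μ n)) atTop (nhds (∫ x, f x ∂μlim))) :
    ∀ g : BoundedContinuousFunction (X × Y) ℝ,
      Tendsto (fun n => ∫ p, g p ∂(μ n ⊗ₘ κ)) atTop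
        (nhds (∫ p, g p ∂(μlim ⊗ₘ κ))) :=
  kernel_comp_weak_convergence_general κ hFeller μ μlim hweak
end

section
/- Let V be a measurable space, π a finite nonnegative measure on V, κ a bounded measurable kernel from V to itself with ‖κ_V‖_∞ := sup_x κ(x,V) < ∞, θ(dx dy) := π(dx)κ(x,dy), and assume detailed balance (θ symmetric under the swap (x,y) ↦ (y,x)). Let G: V×V×ℝ×ℝ → ℝ be jointly measurable, continuous in (u,v), satisfy |G(x,y,u,v)| ≤ M(1+|u|+|v|), the skew-symmetry G(x,y,u,v) = −G(y,x,v,u), and the ℓ-dissipativity condition: for some ℓ ≥ 0, u ≤ u' implies G(x,y,u',v) − G(x,y,u,v) ≤ ℓ(u'−u) for all (x,y) and all u,u',v. Define 𝐆[u](x) := ∫_V G(x,y,u(x),u(y)) κ(x,dy) for π-integrable u. Then for all π-integrable u₁, u₂: V → ℝ, with 𝔰(r) := 1 for r > 0 and 𝔰(r) := −1 for r ≤ 0, one has ∫_V 𝔰(u₁−u₂)·(𝐆[u₁]−𝐆[u₂]) dπ ≤ 2ℓ‖κ_V‖_∞ ∫_V |u₁−u₂| dπ, and consequently for every h > 0: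 ∫_V |(u₁−u₂) − h(𝐆[u₁]−𝐆[u₂])| dπ ≥ (1 − 2ℓ‖κ_V‖_∞ h) ∫_V |u₁−u₂| dπ. -/
open MeasureTheory ProbabilityTheory Filter
open scoped ENNReal

/-! Detailed balance makes `θ = π ⊗ₘ κ` symmetric, and the integrand `F` of `𝐆[u₁] - 𝐆[u₂]` is
antisymmetric, so `2 ∫ 𝔰(w) (𝐆[u₁] - 𝐆[u₂]) dπ = ∫ (𝔰(w x) - 𝔰(w y)) F(x, y) dθ` for
`w = u₁ - u₂`. The right-hand integrand vanishes unless `w x` and `w y` lie on different sides of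
`0`. In that case one passes from `(u₂ x, u₂ y)` to `(u₁ x, u₁ y)` by increasing one argument of `G`
and decreasing the other, and dissipativity in the first argument together with its mirror image
under skew-symmetry bounds `±F(x, y)` by `ℓ (|w x| + |w y|)`. The second inequality follows because
`𝔰(w)` has modulus one and `𝔰(w) w = |w|`. -/

section LowerSign

/-- The sign function `𝔰` with the convention `𝔰(0) = -1`. Unlike `SignType.sign` it has modulus one
everywhere, so multiplying by it preserves absolute values. -/
noncomputable def lowerSign (r : ℝ) : ℝ := if 0 < r then 1 else -1

theorem lowerSign_of_pos {r : ℝ} (hr : 0 < r) : lowerSign r = 1 := if_pos hr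

theorem lowerSign_of_nonpos {r : ℝ} (hr : r ≤ 0) : lowerSign r = -1 := if_neg hr.not_gt

theorem abs_lowerSign (r : ℝ) : |lowerSign r| = 1 := by
  unfold lowerSign
  split_ifs <;> simp

theorem lowerSign_mul_self (r : ℝ) : lowerSign r * r = |r| := by
  rcases lt_or_ge 0 r with hr | hr
  · rw [lowerSign_of_pos hr, one_mul, abs_of_pos hr]
  · rw [lowerSign_of_nonpos hr, neg_one_mul, abs_of_nonpos hr]

theorem measurable_lowerSign : Measurable lowerSign :=
  Measurable.ite measurableSet_Ioi measurable_const measurable_const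

theorem abs_sub_mul_lowerSign_le (w d h : ℝ) :
    |w| - h * (lowerSign w * d) ≤ |w - h * d| :=
  calc |w| - h * (lowerSign w * d) = lowerSign w * (w - h * d) := by
        rw [← lowerSign_mul_self]; ring
    _ ≤ |lowerSign w * (w - h * d)| := le_abs_self _
    _ = |w - h * d| := by rw [abs_mul, abs_lowerSign, one_mul]

theorem lowerSign_sub_mul_sub_le {g : ℝ → ℝ → ℝ} {ℓ : ℝ} (hℓ : 0 ≤ ℓ)
    (hfst : ∀ a a' b, a ≤ a' → g a' b - g a b ≤ ℓ * (a' - a))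
    (hsnd : ∀ a b b', b ≤ b' → g a b - g a b' ≤ ℓ * (b' - b)) (a₁ a₂ b₁ b₂ : ℝ) :
    (lowerSign (a₁ - a₂) - lowerSign (b₁ - b₂)) * (g a₁ b₁ - g a₂ b₂)
      ≤ 2 * ℓ * (|a₁ - a₂| + |b₁ - b₂|) := by
  have hnonneg : 0 ≤ 2 * ℓ * (|a₁ - a₂| + |b₁ - b₂|) := by positivity
  rcases lt_or_ge 0 (a₁ - a₂) with ha | ha <;> rcases lt_or_ge 0 (b₁ - b₂) with hb | hb
  · simpa only [lowerSign_of_pos ha, lowerSign_of_pos hb, sub_self, zero_mul] using hnonneg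
  · rw [lowerSign_of_pos ha, lowerSign_of_nonpos hb, abs_of_pos ha, abs_of_nonpos hb]
    linarith [hfst a₂ a₁ b₁ (by linarith), hsnd a₂ b₁ b₂ (by linarith)]
  · rw [lowerSign_of_nonpos ha, lowerSign_of_pos hb, abs_of_nonpos ha, abs_of_pos hb]
    linarith [hfst a₁ a₂ b₂ (by linarith), hsnd a₁ b₂ b₁ (by linarith)]
  · simpa only [lowerSign_of_nonpos ha, lowerSign_of_nonpos hb, sub_self, zero_mul] using hnonneg

variable {α : Type*} [MeasurableSpace α] {μ : Measure α}

theorem integrable_lowerSign_mul {w f : α → ℝ} (hw : AEMeasurable w μ) (hf : Integrable f μ) :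
    Integrable (fun x => lowerSign (w x) * f x) μ :=
  hf.bdd_mul (measurable_lowerSign.comp_aemeasurable hw).aestronglyMeasurable
    (.of_forall fun x => (abs_lowerSign (w x)).le)

theorem one_sub_mul_integral_abs_le_integral_abs_sub {w d : α → ℝ} (hw : Integrable w μ)
    (hd : Integrable d μ) {C : ℝ} (hC : ∫ x, lowerSign (w x) * d x ∂μ ≤ C * ∫ x, |w x| ∂μ)
    {h : ℝ} (hh : 0 ≤ h) :
    (1 - C * h) * ∫ x, |w x| ∂μ ≤ ∫ x, |w x - h * d x| ∂μ := by
  have hsd : Integrable (fun x => h * (lowerSign (w x) * d x)) μ :=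
    (integrable_lowerSign_mul hw.aemeasurable hd).const_mul h
  calc (1 - C * h) * ∫ x, |w x| ∂μ
      = ∫ x, |w x| ∂μ - h * (C * ∫ x, |w x| ∂μ) := by ring
    _ ≤ ∫ x, |w x| ∂μ - h * ∫ x, lowerSign (w x) * d x ∂μ := by gcongr
    _ = ∫ x, (|w x| - h * (lowerSign (w x) * d x)) ∂μ := by
        rw [integral_sub hw.abs hsd, integral_const_mul]
    _ ≤ ∫ x, |w x - h * d x| ∂μ :=
        integral_mono (hw.abs.sub hsd) (hw.sub (hd.const_mul h)).abs
          fun x => abs_sub_mul_lowerSign_le (w x) (d x) h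

end LowerSign

section SwapInvariant

variable {α : Type*} [MeasurableSpace α] {θ : Measure (α × α)}

theorem integral_swap_of_measurePreserving {E : Type*} [NormedAddCommGroup E] [NormedSpace ℝ E]
    (hθ : MeasurePreserving Prod.swap θ θ) (f : α × α → E) :
    ∫ p, f p.swap ∂θ = ∫ p, f p ∂θ :=
  hθ.integral_comp MeasurableEquiv.prodComm.measurableEmbedding f

theorem two_mul_integral_fst_mul_of_antisymm (hθ : MeasurePreserving Prod.swap θ θ)
    {φ : α → ℝ} {f : α × α → ℝ} (hf : ∀ p, f p.swap = -f p)
    (hφf : Integrable (fun p => φ p.1 * f p) θ) :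
    2 * ∫ p, φ p.1 * f p ∂θ = ∫ p, (φ p.1 - φ p.2) * f p ∂θ := by
  have hφf_swap : Integrable (fun p => φ p.2 * f p.swap) θ := hθ.integrable_comp_of_integrable hφf
  calc 2 * ∫ p, φ p.1 * f p ∂θ
      = ∫ p, φ p.1 * f p ∂θ + ∫ p, φ p.2 * f p.swap ∂θ := by
        rw [two_mul]
        congr 1
        exact (integral_swap_of_measurePreserving hθ _).symm
    _ = ∫ p, (φ p.1 * f p + φ p.2 * f p.swap) ∂θ := (integral_add hφf hφf_swap).symm
    _ = ∫ p, (φ p.1 - φ p.2) * f p ∂θ := by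
        congr with p
        rw [hf]
        ring

end SwapInvariant

section CompProd

variable {α β : Type*} [MeasurableSpace α] [MeasurableSpace β] {μ : Measure α} [SFinite μ]
  {κ : Kernel α β}

theorem quasiMeasurePreserving_fst_compProd [IsSFiniteKernel κ] :
    Measure.QuasiMeasurePreserving Prod.fst (μ ⊗ₘ κ) μ := by
  refine ⟨measurable_fst, Measure.AbsolutelyContinuous.mk fun s hs hμs => ?_⟩
  rw [Measure.map_apply measurable_fst hs, ← Set.prod_univ, Measure.compProd_apply_prod hs .univ]
  exact setLIntegral_measure_zero s _ hμs

theorem integrable_comp_fst_compProd [IsFiniteKernel κ] {E : Type*} [NormedAddCommGroup E]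
    {f : α → E} (hf : Integrable f μ) : Integrable (fun p : α × β => f p.1) (μ ⊗ₘ κ) := by
  have hmass : Integrable (fun x => (κ x).real Set.univ * ‖f x‖) μ :=
    hf.norm.bdd_mul (κ.measurable_coe .univ).ennreal_toReal.aestronglyMeasurable
      (.of_forall fun x => by
        rw [Real.norm_of_nonneg measureReal_nonneg]
        exact ENNReal.toReal_mono κ.bound_ne_top (κ.measure_le_bound x _))
  refine (Measure.integrable_compProd_iff
    (hf.aestronglyMeasurable.comp_quasiMeasurePreserving quasiMeasurePreserving_fst_compProd)).2
    ⟨.of_forall fun x => integrable_const (f x), ?_⟩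
  simpa only [Function.comp_apply, integral_const, smul_eq_mul] using hmass

theorem integral_abs_fst_compProd_le [IsFiniteKernel κ] {K : ℝ}
    (hK : ∀ x, (κ x).real Set.univ ≤ K) {f : α → ℝ} (hf : Integrable f μ) :
    ∫ p, |f p.1| ∂(μ ⊗ₘ κ) ≤ K * ∫ x, |f x| ∂μ := by
  have hint : Integrable (fun p : α × β => |f p.1|) (μ ⊗ₘ κ) := integrable_comp_fst_compProd hf.abs
  calc ∫ p, |f p.1| ∂(μ ⊗ₘ κ) = ∫ x, ∫ _, |f x| ∂κ x ∂μ := Measure.integral_compProd hint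
    _ ≤ ∫ x, K * |f x| ∂μ := by
        refine integral_mono_of_nonneg (.of_forall fun x => integral_nonneg fun _ => abs_nonneg _)
          (hf.abs.const_mul K) (.of_forall fun x => ?_)
        simpa only [integral_const, smul_eq_mul] using
          mul_le_mul_of_nonneg_right (hK x) (abs_nonneg (f x))
    _ = K * ∫ x, |f x| ∂μ := integral_const_mul K _

theorem integrable_integral_kernel [IsSFiniteKernel κ] {E : Type*} [NormedAddCommGroup E]
    [NormedSpace ℝ E] {f : α × β → E} (hf : Integrable f (μ ⊗ₘ κ)) :
    Integrable (fun x => ∫ y, f (x, y) ∂κ x) μ := by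
  rw [Measure.compProd] at hf
  simpa only [Kernel.const_apply, Kernel.prodMkLeft_apply] using hf.integral_compProd

theorem integral_mul_integral_kernel [IsSFiniteKernel κ] {φ : α → ℝ} {f : α × β → ℝ}
    (hφf : Integrable (fun p => φ p.1 * f p) (μ ⊗ₘ κ)) :
    ∫ x, φ x * ∫ y, f (x, y) ∂κ x ∂μ = ∫ p, φ p.1 * f p ∂(μ ⊗ₘ κ) := by
  simp only [Measure.integral_compProd hφf, integral_const_mul]

end CompProd

section NonlocalOperator

variable {V : Type*}

/-- The values of the field `G` along the edges `(x, y)` when the state at each vertex is prescribed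
by `u`, as a function on `V × V`. Integrating it against `κ x` in `y` gives `𝐆[u](x)`. -/
def edgeField (G : V → V → ℝ → ℝ → ℝ) (u : V → ℝ) (p : V × V) : ℝ := G p.1 p.2 (u p.1) (u p.2)

theorem edgeField_swap {G : V → V → ℝ → ℝ → ℝ} (hG : ∀ x y a b, G x y a b = -G y x b a)
    (u : V → ℝ) (p : V × V) : edgeField G u p.swap = -edgeField G u p :=
  hG _ _ _ _

theorem lowerSign_sub_mul_edgeField_sub_le {G : V → V → ℝ → ℝ → ℝ}
    (hskew : ∀ x y a b, G x y a b = -G y x b a) {ℓ : ℝ} (hℓ : 0 ≤ ℓ)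
    (hdiss : ∀ x y a a' b, a ≤ a' → G x y a' b - G x y a b ≤ ℓ * (a' - a))
    (u₁ u₂ : V → ℝ) (p : V × V) :
    (lowerSign (u₁ p.1 - u₂ p.1) - lowerSign (u₁ p.2 - u₂ p.2))
        * (edgeField G u₁ p - edgeField G u₂ p)
      ≤ 2 * ℓ * (|u₁ p.1 - u₂ p.1| + |u₁ p.2 - u₂ p.2|) := by
  have hdiss_snd (a b b' : ℝ) (hb : b ≤ b') :
      G p.1 p.2 a b - G p.1 p.2 a b' ≤ ℓ * (b' - b) := by
    linarith [hdiss p.2 p.1 b b' a hb, hskew p.1 p.2 a b, hskew p.1 p.2 a b']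
  exact lowerSign_sub_mul_sub_le hℓ (hdiss p.1 p.2) hdiss_snd _ _ _ _

variable [MeasurableSpace V] {π : Measure V} {κ : Kernel V V} {G : V → V → ℝ → ℝ → ℝ}

/-- The nonlocal operator `𝐆[u](x) = ∫ G(x, y, u(x), u(y)) κ(x, dy)`. It takes the junk value `0` at
those `x` where the integrand is not `κ x`-integrable. -/
noncomputable def nonlocalOperator (κ : Kernel V V) (G : V → V → ℝ → ℝ → ℝ) (u : V → ℝ) (x : V) :
    ℝ :=
  ∫ y, edgeField G u (x, y) ∂κ x

theorem integrable_edgeField [IsFiniteMeasure π] [IsFiniteKernel κ]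
    (hswap : MeasurePreserving Prod.swap (π ⊗ₘ κ) (π ⊗ₘ κ))
    (hmeas : Measurable fun p : (V × V) × ℝ × ℝ => G p.1.1 p.1.2 p.2.1 p.2.2)
    {M : ℝ} (hbound : ∀ x y a b, |G x y a b| ≤ M * (1 + |a| + |b|))
    {u : V → ℝ} (hu : Integrable u π) : Integrable (edgeField G u) (π ⊗ₘ κ) := by
  have hfst : Integrable (fun p : V × V => u p.1) (π ⊗ₘ κ) := integrable_comp_fst_compProd hu
  have hsnd : Integrable (fun p : V × V => u p.2) (π ⊗ₘ κ) :=
    hswap.integrable_comp_of_integrable hfst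
  have hfield : AEStronglyMeasurable (edgeField G u) (π ⊗ₘ κ) :=
    (hmeas.comp_aemeasurable
      (aemeasurable_id.prodMk (hfst.aemeasurable.prodMk hsnd.aemeasurable))).aestronglyMeasurable
  exact ((((integrable_const 1).add hfst.abs).add hsnd.abs).const_mul M).mono' hfield
    (.of_forall fun p => hbound _ _ _ _)

variable [SFinite π]

theorem nonlocalOperator_sub_ae_eq [IsSFiniteKernel κ] {u₁ u₂ : V → ℝ}
    (h₁ : Integrable (edgeField G u₁) (π ⊗ₘ κ)) (h₂ : Integrable (edgeField G u₂) (π ⊗ₘ κ)) :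
    (fun x => nonlocalOperator κ G u₁ x - nonlocalOperator κ G u₂ x)
      =ᵐ[π] fun x => ∫ y, (edgeField G u₁ - edgeField G u₂) (x, y) ∂κ x := by
  filter_upwards [((Measure.integrable_compProd_iff h₁.aestronglyMeasurable).1 h₁).1,
    ((Measure.integrable_compProd_iff h₂.aestronglyMeasurable).1 h₂).1] with x hx₁ hx₂
  exact (integral_sub hx₁ hx₂).symm

theorem two_mul_integral_mul_nonlocalOperator_sub [IsSFiniteKernel κ]
    (hswap : MeasurePreserving Prod.swap (π ⊗ₘ κ) (π ⊗ₘ κ))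
    (hskew : ∀ x y a b, G x y a b = -G y x b a) {φ u₁ u₂ : V → ℝ}
    (h₁ : Integrable (edgeField G u₁) (π ⊗ₘ κ)) (h₂ : Integrable (edgeField G u₂) (π ⊗ₘ κ))
    (hφ : Integrable (fun p => φ p.1 * (edgeField G u₁ - edgeField G u₂) p) (π ⊗ₘ κ)) :
    2 * ∫ x, φ x * (nonlocalOperator κ G u₁ x - nonlocalOperator κ G u₂ x) ∂π
      = ∫ p, (φ p.1 - φ p.2) * (edgeField G u₁ - edgeField G u₂) p ∂(π ⊗ₘ κ) := by
  have hanti (p : V × V) :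
      (edgeField G u₁ - edgeField G u₂) p.swap = -(edgeField G u₁ - edgeField G u₂) p := by
    simp only [Pi.sub_apply, edgeField_swap hskew]
    ring
  rw [← two_mul_integral_fst_mul_of_antisymm hswap hanti hφ, ← integral_mul_integral_kernel hφ]
  congr 1
  refine integral_congr_ae ?_
  filter_upwards [nonlocalOperator_sub_ae_eq h₁ h₂] with x hx
  rw [hx]

theorem integral_lowerSign_mul_nonlocalOperator_sub_le [IsFiniteKernel κ] {K : ℝ}
    (hK : ∀ x, (κ x).real Set.univ ≤ K) (hswap : MeasurePreserving Prod.swap (π ⊗ₘ κ) (π ⊗ₘ κ))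
    (hskew : ∀ x y a b, G x y a b = -G y x b a) {ℓ : ℝ} (hℓ : 0 ≤ ℓ)
    (hdiss : ∀ x y a a' b, a ≤ a' → G x y a' b - G x y a b ≤ ℓ * (a' - a))
    {u₁ u₂ : V → ℝ} (hu : Integrable (fun x => u₁ x - u₂ x) π)
    (h₁ : Integrable (edgeField G u₁) (π ⊗ₘ κ)) (h₂ : Integrable (edgeField G u₂) (π ⊗ₘ κ)) :
    ∫ x, lowerSign (u₁ x - u₂ x) * (nonlocalOperator κ G u₁ x - nonlocalOperator κ G u₂ x) ∂π
      ≤ 2 * ℓ * K * ∫ x, |u₁ x - u₂ x| ∂π := by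
  set w : V → ℝ := fun x => u₁ x - u₂ x
  have hfst : Integrable (fun p : V × V => w p.1) (π ⊗ₘ κ) := integrable_comp_fst_compProd hu
  have hsnd : Integrable (fun p : V × V => w p.2) (π ⊗ₘ κ) :=
    hswap.integrable_comp_of_integrable hfst
  have hsnd_eq : ∫ p, |w p.2| ∂(π ⊗ₘ κ) = ∫ p, |w p.1| ∂(π ⊗ₘ κ) :=
    integral_swap_of_measurePreserving hswap fun p => |w p.1|
  have hsign_fst := integrable_lowerSign_mul hfst.aemeasurable (h₁.sub h₂)
  have hsign_snd := integrable_lowerSign_mul hsnd.aemeasurable (h₁.sub h₂)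
  have hsign_sub : Integrable (fun p : V × V => (lowerSign (w p.1) - lowerSign (w p.2))
      * (edgeField G u₁ - edgeField G u₂) p) (π ⊗ₘ κ) := by
    simp only [sub_mul]
    exact hsign_fst.sub hsign_snd
  suffices h : 2 * ∫ x, lowerSign (w x) *
      (nonlocalOperator κ G u₁ x - nonlocalOperator κ G u₂ x) ∂π
        ≤ 4 * ℓ * (K * ∫ x, |w x| ∂π) by linarith
  calc 2 * ∫ x, lowerSign (w x) * (nonlocalOperator κ G u₁ x - nonlocalOperator κ G u₂ x) ∂π
      = ∫ p, (lowerSign (w p.1) - lowerSign (w p.2))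
          * (edgeField G u₁ - edgeField G u₂) p ∂(π ⊗ₘ κ) :=
        two_mul_integral_mul_nonlocalOperator_sub hswap hskew h₁ h₂
          (φ := fun x => lowerSign (w x)) hsign_fst
    _ ≤ ∫ p, 2 * ℓ * (|w p.1| + |w p.2|) ∂(π ⊗ₘ κ) :=
        integral_mono hsign_sub ((hfst.abs.add hsnd.abs).const_mul (2 * ℓ))
          (lowerSign_sub_mul_edgeField_sub_le hskew hℓ hdiss u₁ u₂)
    _ = 4 * ℓ * ∫ p, |w p.1| ∂(π ⊗ₘ κ) := by
        rw [integral_const_mul, integral_add hfst.abs hsnd.abs, hsnd_eq]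
        ring
    _ ≤ 4 * ℓ * (K * ∫ x, |w x| ∂π) := by
        gcongr
        exact integral_abs_fst_compProd_le hK hu

theorem nonlocal_operator_dissipative_general [IsFiniteKernel κ] {K : ℝ}
    (hK : ∀ x, (κ x).real Set.univ ≤ K) (hswap : MeasurePreserving Prod.swap (π ⊗ₘ κ) (π ⊗ₘ κ))
    (hskew : ∀ x y a b, G x y a b = -G y x b a) {ℓ : ℝ} (hℓ : 0 ≤ ℓ)
    (hdiss : ∀ x y a a' b, a ≤ a' → G x y a' b - G x y a b ≤ ℓ * (a' - a))
    {u₁ u₂ : V → ℝ} (hu : Integrable (fun x => u₁ x - u₂ x) π)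
    (h₁ : Integrable (edgeField G u₁) (π ⊗ₘ κ)) (h₂ : Integrable (edgeField G u₂) (π ⊗ₘ κ)) :
    (∫ x, lowerSign (u₁ x - u₂ x) * (nonlocalOperator κ G u₁ x - nonlocalOperator κ G u₂ x) ∂π
      ≤ 2 * ℓ * K * ∫ x, |u₁ x - u₂ x| ∂π) ∧
    ∀ h : ℝ, 0 < h →
      (1 - 2 * ℓ * K * h) * ∫ x, |u₁ x - u₂ x| ∂π
        ≤ ∫ x, |(u₁ x - u₂ x)
            - h * (nonlocalOperator κ G u₁ x - nonlocalOperator κ G u₂ x)| ∂π := by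
  have hsign := integral_lowerSign_mul_nonlocalOperator_sub_le hK hswap hskew hℓ hdiss hu h₁ h₂
  have hop : Integrable (fun x => nonlocalOperator κ G u₁ x - nonlocalOperator κ G u₂ x) π :=
    (integrable_integral_kernel h₁).sub (integrable_integral_kernel h₂)
  exact ⟨hsign, fun h hh => one_sub_mul_integral_abs_le_integral_abs_sub hu hop hsign hh.le⟩

end NonlocalOperator

/-- Dissipativity of the nonlocal operator `𝐆[u](x) = ∫ G(x,y,u(x),u(y)) κ(x,dy)`
in `L¹(V,π)`, for a skew-symmetric, `ℓ`-dissipative field `G`. -/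
theorem nonlocal_operator_dissipative
    {V : Type*} [MeasurableSpace V]
    (π : Measure V) [IsFiniteMeasure π]
    (κ : Kernel V V) [IsFiniteKernel κ]
    (K : ℝ) (hK0 : 0 ≤ K) (hK : ∀ x, κ x Set.univ ≤ ENNReal.ofReal K)
    (hdb : (π ⊗ₘ κ).map Prod.swap = π ⊗ₘ κ)
    (M : ℝ) (hM : 0 < M)
    (G : V → V → ℝ → ℝ → ℝ)
    (hGmeas : Measurable fun p : (V × V) × ℝ × ℝ => G p.1.1 p.1.2 p.2.1 p.2.2)
    (hGcont : ∀ x y : V, Continuous fun q : ℝ × ℝ => G x y q.1 q.2)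
    (hGbound : ∀ (x y : V) (a b : ℝ), |G x y a b| ≤ M * (1 + |a| + |b|))
    (hGskew : ∀ (x y : V) (a b : ℝ), G x y a b = - G y x b a)
    (ℓ : ℝ) (hℓ : 0 ≤ ℓ)
    (hGdiss : ∀ (x y : V) (a a' b : ℝ), a ≤ a' →
      G x y a' b - G x y a b ≤ ℓ * (a' - a))
    (u₁ u₂ : V → ℝ)
    (h₁meas : Measurable u₁) (h₁int : Integrable u₁ π)
    (h₂meas : Measurable u₂) (h₂int : Integrable u₂ π) :
    (∫ x, (if 0 < u₁ x - u₂ x then (1:ℝ) else -1) *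
        ((∫ y, G x y (u₁ x) (u₁ y) ∂(κ x)) - (∫ y, G x y (u₂ x) (u₂ y) ∂(κ x))) ∂π
      ≤ 2 * ℓ * K * ∫ x, |u₁ x - u₂ x| ∂π) ∧
    (∀ h : ℝ, 0 < h →
      (1 - 2 * ℓ * K * h) * (∫ x, |u₁ x - u₂ x| ∂π)
        ≤ ∫ x, |(u₁ x - u₂ x)
            - h * ((∫ y, G x y (u₁ x) (u₁ y) ∂(κ x))
                    - (∫ y, G x y (u₂ x) (u₂ y) ∂(κ x)))| ∂π) := by
  have hκ (x : V) : (κ x).real Set.univ ≤ K := ENNReal.toReal_le_of_le_ofReal hK0 (hK x)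
  have hswap : MeasurePreserving Prod.swap (π ⊗ₘ κ) (π ⊗ₘ κ) := ⟨measurable_swap, hdb⟩
  exact nonlocal_operator_dissipative_general hκ hswap hGskew hℓ hGdiss (h₁int.sub h₂int)
    (integrable_edgeField hswap hGmeas hGbound h₁int)
    (integrable_edgeField hswap hGmeas hGbound h₂int)
end
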